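/- Let p be a prime and L a finite connected simplicial complex. Then there exist an integer m, a finite simplicial complex L̂, and a simplicial action of (Z/pZ)^m on L̂ whose orbit space is a subdivision of L, such that the orbit map f: L̂ → L has the following property: for each simplex σ of L, the inclusion f^{-1}(∂σ) → f^{-1}(σ) induces an isomorphism on H_1(−; Z/pZ). -/

import Mathlib

open Set Function

open scoped ENNReal

noncomputable section

/-! ### Alexander–Spanier (Čech) cohomology -/

namespace AS

variable (A : Type*) [AddCommGroup A]

/-- Alexander–Spanier `n`-cochains on `X` with coefficients in `A`. -/
abbrev Cochain (X : Type*) (n : ℕ) : Type _ := (Fin (n + 1) → X) → A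

/-- The Alexander–Spanier coboundary operator. -/
def d (X : Type*) (n : ℕ) : Cochain A X n →+ Cochain A X (n + 1) :=
  AddMonoidHom.mk' (fun φ s => ∑ i : Fin (n + 2), ((-1 : ℤ) ^ (i : ℕ)) • φ (s ∘ i.succAbove))
    (fun φ ψ => funext fun s => by
      simp [smul_add, Finset.sum_add_distrib])

/-- An open cover of `X`. -/
def IsOpenCover {X : Type*} [TopologicalSpace X] (U : Set (Set X)) : Prop :=
  (∀ u ∈ U, IsOpen u) ∧ ⋃₀ U = univ

/-- A tuple is `U`-small if it is contained in a single member of `U`. -/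
def Small {X : Type*} (U : Set (Set X)) {k : ℕ} (s : Fin k → X) : Prop :=
  ∃ u ∈ U, ∀ i, s i ∈ u

/-- The subgroup of cochains vanishing on all tuples that are small with respect to
some open cover (i.e. vanishing in a neighbourhood of the diagonal). -/
def locZero (X : Type*) [TopologicalSpace X] (n : ℕ) : AddSubgroup (Cochain A X n) where
  carrier := {φ | ∃ U, IsOpenCover U ∧ ∀ s : Fin (n + 1) → X, Small U s → φ s = 0}
  zero_mem' := ⟨{univ}, ⟨fun u hu => by rw [mem_singleton_iff] at hu; rw [hu]; exact isOpen_univ,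
      by simp⟩, fun s _ => rfl⟩
  add_mem' := by
    rintro φ ψ ⟨U, ⟨hUo, hUc⟩, hφ⟩ ⟨W, ⟨hWo, hWc⟩, hψ⟩
    refine ⟨(fun p : Set X × Set X => p.1 ∩ p.2) '' (U ×ˢ W), ⟨?_, ?_⟩, ?_⟩
    · rintro _ ⟨⟨u, w⟩, ⟨hu, hw⟩, rfl⟩
      exact (hUo u hu).inter (hWo w hw)
    · apply eq_univ_of_forall
      intro x
      have hx1 : x ∈ ⋃₀ U := hUc ▸ mem_univ x
      have hx2 : x ∈ ⋃₀ W := hWc ▸ mem_univ x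
      obtain ⟨u, hu, hxu⟩ := hx1
      obtain ⟨w, hw, hxw⟩ := hx2
      exact ⟨u ∩ w, ⟨⟨u, w⟩, ⟨hu, hw⟩, rfl⟩, hxu, hxw⟩
    · rintro s ⟨_, ⟨⟨u, w⟩, ⟨hu, hw⟩, rfl⟩, hs⟩
      have h1 : φ s = 0 := hφ s ⟨u, hu, fun i => (hs i).1⟩
      have h2 : ψ s = 0 := hψ s ⟨w, hw, fun i => (hs i).2⟩
      show φ s + ψ s = 0
      rw [h1, h2, add_zero]
  neg_mem' := by
    rintro φ ⟨U, hU, hφ⟩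
    exact ⟨U, hU, fun s hs => by show -φ s = 0; rw [hφ s hs, neg_zero]⟩

/-- The Alexander–Spanier cochain complex: cochains modulo locally zero cochains. -/
abbrev QC (X : Type*) [TopologicalSpace X] (n : ℕ) : Type _ := Cochain A X n ⧸ locZero A X n

lemma d_locZero (X : Type*) [TopologicalSpace X] (n : ℕ) :
    locZero A X n ≤ (locZero A X (n + 1)).comap (d A X n) := by
  rintro φ ⟨U, hU, hφ⟩
  refine ⟨U, hU, fun s ⟨u, hu, hs⟩ => ?_⟩
  show (d A X n φ) s = 0
  have : ∀ i : Fin (n + 2), φ (s ∘ i.succAbove) = 0 :=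
    fun i => hφ _ ⟨u, hu, fun j => hs _⟩
  simp only [d, AddMonoidHom.mk'_apply]
  exact Finset.sum_eq_zero fun i _ => by rw [this i, smul_zero]

/-- The induced differential on the Alexander–Spanier complex. -/
def dQ (X : Type*) [TopologicalSpace X] (n : ℕ) : QC A X n →+ QC A X (n + 1) :=
  QuotientAddGroup.map _ _ (d A X n) (d_locZero A X n)

/-- Cocycles. -/
def cocycles (X : Type*) [TopologicalSpace X] (n : ℕ) : AddSubgroup (QC A X n) :=
  (dQ A X n).ker

/-- Coboundaries (the trivial subgroup in degree `0`). -/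
def cobounds (X : Type*) [TopologicalSpace X] (n : ℕ) : AddSubgroup (QC A X n) :=
  match n with
  | 0 => ⊥
  | (m + 1) => (dQ A X m).range

/-- Alexander–Spanier cohomology of `X` with coefficients in `A`; for paracompact Hausdorff
(e.g. metric) spaces this is naturally isomorphic to Čech cohomology. -/
def ASH (n : ℕ) (X : Type*) [TopologicalSpace X] : Type _ :=
  ↥(cocycles A X n) ⧸ ((cobounds A X n).comap (cocycles A X n).subtype)

instance (n : ℕ) (X : Type*) [TopologicalSpace X] : AddCommGroup (ASH A n X) :=
  inferInstanceAs (AddCommGroup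
    (↥(cocycles A X n) ⧸ ((cobounds A X n).comap (cocycles A X n).subtype)))

end AS

namespace AS

variable (A : Type*) [AddCommGroup A]

/-- Pullback of Alexander–Spanier cochains along a map. -/
def pull {X Y : Type*} (f : X → Y) (n : ℕ) : Cochain A Y n →+ Cochain A X n :=
  AddMonoidHom.mk' (fun φ s => φ (f ∘ s)) (fun φ ψ => rfl)

lemma pull_d {X Y : Type*} (f : X → Y) (n : ℕ) (φ : Cochain A Y n) :
    pull A f (n + 1) (d A Y n φ) = d A X n (pull A f n φ) := rfl

lemma pull_locZero {X Y : Type*} [TopologicalSpace X] [TopologicalSpace Y] {f : X → Y}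
    (hf : Continuous f) (n : ℕ) :
    locZero A Y n ≤ (locZero A X n).comap (pull A f n) := by
  rintro φ ⟨U, ⟨hUo, hUc⟩, hφ⟩
  refine ⟨(f ⁻¹' ·) '' U, ⟨?_, ?_⟩, ?_⟩
  · rintro _ ⟨u, hu, rfl⟩
    exact (hUo u hu).preimage hf
  · apply eq_univ_of_forall
    intro x
    have : f x ∈ ⋃₀ U := hUc ▸ mem_univ _
    obtain ⟨u, hu, hx⟩ := this
    exact ⟨f ⁻¹' u, ⟨u, hu, rfl⟩, hx⟩
  · rintro s ⟨_, ⟨u, hu, rfl⟩, hs⟩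
    exact hφ _ ⟨u, hu, fun i => hs i⟩

/-- Pullback on the Alexander–Spanier complex. -/
def pullQ {X Y : Type*} [TopologicalSpace X] [TopologicalSpace Y] {f : X → Y}
    (hf : Continuous f) (n : ℕ) : QC A Y n →+ QC A X n :=
  QuotientAddGroup.map _ _ (pull A f n) (pull_locZero A hf n)

lemma pullQ_d {X Y : Type*} [TopologicalSpace X] [TopologicalSpace Y] {f : X → Y}
    (hf : Continuous f) (n : ℕ) (x : QC A Y n) :
    pullQ A hf (n + 1) (dQ A Y n x) = dQ A X n (pullQ A hf n x) := by
  refine QuotientAddGroup.induction_on x ?_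
  intro φ
  simp only [pullQ, dQ, QuotientAddGroup.map_mk, pull_d]

lemma pullQ_cocycles {X Y : Type*} [TopologicalSpace X] [TopologicalSpace Y] {f : X → Y}
    (hf : Continuous f) (n : ℕ) {x : QC A Y n} (hx : x ∈ cocycles A Y n) :
    pullQ A hf n x ∈ cocycles A X n := by
  have : dQ A Y n x = 0 := hx
  show dQ A X n (pullQ A hf n x) = 0
  rw [← pullQ_d, this, map_zero]

lemma pullQ_cobounds {X Y : Type*} [TopologicalSpace X] [TopologicalSpace Y] {f : X → Y}
    (hf : Continuous f) (n : ℕ) {x : QC A Y n} (hx : x ∈ cobounds A Y n) :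
    pullQ A hf n x ∈ cobounds A X n := by
  match n with
  | 0 =>
    have : x = 0 := hx
    rw [this, map_zero]
    exact (⊥ : AddSubgroup (QC A X 0)).zero_mem
  | (m + 1) =>
    obtain ⟨y, rfl⟩ := hx
    exact ⟨pullQ A hf m y, (pullQ_d A hf m y).symm⟩

/-- The map on cocycles induced by a continuous map. -/
def pullZ {X Y : Type*} [TopologicalSpace X] [TopologicalSpace Y] {f : X → Y}
    (hf : Continuous f) (n : ℕ) : ↥(cocycles A Y n) →+ ↥(cocycles A X n) :=
  AddMonoidHom.codRestrict ((pullQ A hf n).comp (cocycles A Y n).subtype) _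
    (fun x => pullQ_cocycles A hf n x.2)

/-- The homomorphism induced on Alexander–Spanier (Čech) cohomology by a continuous map.
Note the contravariance: a map `f : X → Y` induces `ASHmap : ASH A n Y →+ ASH A n X`. -/
def ASHmap {X Y : Type*} [TopologicalSpace X] [TopologicalSpace Y] {f : X → Y}
    (hf : Continuous f) (n : ℕ) : ASH A n Y →+ ASH A n X :=
  QuotientAddGroup.map _ _ (pullZ A hf n) (by
    rintro ⟨x, hx⟩ hmem
    have : x ∈ cobounds A Y n := hmem
    exact pullQ_cobounds A hf n this)

end AS

namespace AS

variable (A : Type*) [AddCommGroup A]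

/-- Čech cohomology with compact supports: for compact `B` this is the (Alexander–Spanier =
Čech) cohomology of `B` itself, and for noncompact `B` it is that of the one-point
compactification of `B`. -/
def Hc (n : ℕ) (B : Type*) [TopologicalSpace B] : Type _ :=
  open scoped Classical in
  if CompactSpace B then ASH A n B else ASH A n (OnePoint B)

end AS

/-- The cohomological dimension `dim_A X` of a space `X` with respect to an abelian group `A`:
the supremum of the integers `n` for which there is a locally compact subset `B ⊆ X` with
`H^n_c(B; A) ≠ 0`. -/
noncomputable def cohDim (A : Type*) [AddCommGroup A] (X : Type*) [TopologicalSpace X] : ℕ∞ :=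
  sSup {e : ℕ∞ | ∃ n : ℕ, e = (n : ℕ∞) ∧
    ∃ B : Set X, LocallyCompactSpace B ∧ Nontrivial (AS.Hc A n B)}

/-! ### Finite simplicial complexes and their geometric realizations -/

/-- An abstract simplicial complex on a finite vertex set `V`. -/
structure FinSimpComplex (V : Type*) [Fintype V] [DecidableEq V] where
  faces : Finset (Finset V)
  nonempty_of_mem : ∀ s ∈ faces, s.Nonempty
  down_closed : ∀ s ∈ faces, ∀ t, t ⊆ s → t.Nonempty → t ∈ faces

namespace FinSimpComplex

variable {V : Type*} [Fintype V] [DecidableEq V] (K : FinSimpComplex V)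

/-- The geometric realization `|K|` of `K`, as a subspace of `ℝ^V`
(barycentric coordinates). -/
def space : Set (V → ℝ) :=
  {w | (∀ v, 0 ≤ w v) ∧ (∑ v, w v) = 1 ∧ ∃ s ∈ K.faces, ∀ v, w v ≠ 0 → v ∈ s}

/-- The closed geometric simplex of `σ` inside `|K|`. -/
def geomSimplex (σ : Finset V) : Set ↥K.space := {x | ∀ v, x.val v ≠ 0 → v ∈ σ}

/-- The geometric boundary `∂σ` of the simplex `σ` inside `|K|`:
points of the simplex supported in a proper face. -/
def geomBoundary (σ : Finset V) : Set ↥K.space :=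
  {x | (∀ v, x.val v ≠ 0 → v ∈ σ) ∧ ∃ v ∈ σ, x.val v = 0}

lemma geomBoundary_subset (σ : Finset V) : K.geomBoundary σ ⊆ K.geomSimplex σ :=
  fun _ hx => hx.1

lemma perm_mem {e : V ≃ V} (he : ∀ s ∈ K.faces, s.image e ∈ K.faces) {w : V → ℝ}
    (hw : w ∈ K.space) : (fun v => w (e.symm v)) ∈ K.space := by
  obtain ⟨hnn, hsum, s, hs, hsupp⟩ := hw
  refine ⟨fun v => hnn _, ?_, s.image e, he s hs, ?_⟩
  · rw [← hsum]
    exact Fintype.sum_equiv e.symm _ _ (fun v => rfl)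
  · intro v hv
    exact Finset.mem_image.mpr ⟨e.symm v, hsupp _ hv, e.apply_symm_apply v⟩

/-- The simplicial homeomorphism of `|K|` induced by a face-preserving permutation of the
vertices. -/
def permAct {e : V ≃ V} (he : ∀ s ∈ K.faces, s.image e ∈ K.faces) :
    ↥K.space → ↥K.space :=
  fun x => ⟨fun v => x.val (e.symm v), K.perm_mem he x.2⟩

lemma permAct_continuous {e : V ≃ V} (he : ∀ s ∈ K.faces, s.image e ∈ K.faces) :
    Continuous (K.permAct he) := by
  apply Continuous.subtype_mk
  exact continuous_pi fun v => (continuous_apply (e.symm v)).comp continuous_subtype_val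

/-- The action of a group element on `|K|`, for a simplicial action of `G` on the vertices. -/
def gAct {G : Type*} [Group G] [MulAction G V]
    (hsimp : ∀ g : G, ∀ s ∈ K.faces, s.image (g • ·) ∈ K.faces) (g : G) :
    ↥K.space → ↥K.space :=
  K.permAct (e := MulAction.toPerm g) (by
    intro s hs
    have := hsimp g s hs
    simpa [MulAction.toPerm] using this)

lemma gAct_continuous {G : Type*} [Group G] [MulAction G V]
    (hsimp : ∀ g : G, ∀ s ∈ K.faces, s.image (g • ·) ∈ K.faces) (g : G) :
    Continuous (K.gAct hsimp g) :=
  K.permAct_continuous _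

end FinSimpComplex

/-!
A vertex of `L̂` is represented by a flag `F` of simplices of `L`, that is, a vertex of the second
barycentric subdivision of `L`, a base vertex `v` common to the members of `F`, and a shift `b τ`
for each `τ ∈ F` with at least three vertices. A shift is a function of an alternating `1`-cochain
`α`; moving the base vertex from `u` to `v` adds the function `α ↦ α u v` to every shift, and
vertices related by such moves are identified. The complex `L̂` is the order complex of these
vertices, the group of families of shifts acts by translation, and the orbit map forgets `v`
and `b`.

Over a simplex `σ` with at least three vertices, the part of `L̂` away from the apexes, the vertices
with flag `{σ}`, is a mapping cylinder onto the part over `∂σ`, and each apex is the tip of a cone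
over its link. The links are connected, so a potential over `∂σ` of a cocycle over `σ` extends
to the apexes. A cocycle `a` over `∂σ` has a potential on the star of each vertex `v` of `σ`;
comparing the potentials along the edges of `σ` defines an alternating cochain `α`, and evaluating
the shift `b σ` at `α` corrects these potentials to one on the whole link of an apex. Hence `a` is
exact on every link and extends over the apexes. If `σ` has at most two vertices, the part over `σ`
is a cone and the part over `∂σ` is discrete.
-/

/-! ### Alexander–Spanier cochains of degree one -/

namespace AS

section Functoriality

variable {A : Type*} [AddCommGroup A] {X X' Y Y' Z : Type*} [TopologicalSpace X]
  [TopologicalSpace X'] [TopologicalSpace Y] [TopologicalSpace Y'] [TopologicalSpace Z]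

lemma ASHmap_comp_apply {f : X → Y} {g : Y → Z} (hf : Continuous f) (hg : Continuous g) (n : ℕ)
    (c : ASH A n Z) : ASHmap A (hg.comp hf) n c = ASHmap A hf n (ASHmap A hg n c) := by
  obtain ⟨⟨q, hq⟩, rfl⟩ := QuotientAddGroup.mk_surjective c
  obtain ⟨φ, rfl⟩ := QuotientAddGroup.mk_surjective q
  rfl

lemma ASHmap_id_apply (n : ℕ) (c : ASH A n X) : ASHmap A continuous_id n c = c := by
  obtain ⟨⟨q, hq⟩, rfl⟩ := QuotientAddGroup.mk_surjective c
  obtain ⟨φ, rfl⟩ := QuotientAddGroup.mk_surjective q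
  rfl

lemma leftInverse_ASHmap {f : X → Y} {g : Y → X} (hf : Continuous f) (hg : Continuous g)
    (h : LeftInverse g f) (n : ℕ) : LeftInverse (ASHmap A hf n) (ASHmap A hg n) := by
  intro c
  have hgf : g ∘ f = id := funext h
  rw [← ASHmap_comp_apply hf hg]
  simp only [hgf, ASHmap_id_apply]

lemma bijective_ASHmap_homeomorph (e : X ≃ₜ Y) (n : ℕ) :
    Bijective (ASHmap A e.continuous n) :=
  ⟨(leftInverse_ASHmap e.symm.continuous e.continuous e.apply_symm_apply n).injective,
    (leftInverse_ASHmap e.continuous e.symm.continuous e.symm_apply_apply n).surjective⟩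

lemma bijective_ASHmap_of_homeomorph (e : X ≃ₜ X') (e' : Y ≃ₜ Y') {f : X → Y} {f' : X' → Y'}
    (hf : Continuous f) (hf' : Continuous f') (hcomm : ∀ x, e' (f x) = f' (e x)) {n : ℕ}
    (h : Bijective (ASHmap A hf' n)) : Bijective (ASHmap A hf n) := by
  refine (Bijective.of_comp_iff _ (bijective_ASHmap_homeomorph e' n)).1 ?_
  have hsquare : e' ∘ f = f' ∘ e := funext hcomm
  have hmaps : ASHmap A hf n ∘ ASHmap A e'.continuous n =
      ASHmap A e.continuous n ∘ ASHmap A hf' n := by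
    ext c
    simp only [comp_apply, ← ASHmap_comp_apply, hsquare]
  rw [hmaps]
  exact (bijective_ASHmap_homeomorph e n).comp h

end Functoriality

section LocalCochains

variable {A : Type*} [AddCommGroup A] {X Y : Type*} [TopologicalSpace X] [TopologicalSpace Y]

/-- A function of two variables satisfies the cocycle identity on all sufficiently small triples:
it represents a degree-one Alexander–Spanier cocycle. -/
def IsLocCocycle (φ : X → X → A) : Prop :=
  ∀ x₀, ∃ u ∈ nhds x₀, ∀ x ∈ u, ∀ y ∈ u, ∀ z ∈ u, φ x z = φ x y + φ y z

/-- `φ` is the coboundary of `g` on all sufficiently small pairs: it represents a degree-one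
Alexander–Spanier coboundary. -/
def IsLocPotential (φ : X → X → A) (g : X → A) : Prop :=
  ∀ x₀, ∃ u ∈ nhds x₀, ∀ x ∈ u, ∀ y ∈ u, φ x y = g y - g x

lemma IsLocPotential.comp {φ : Y → Y → A} {g : Y → A} (h : IsLocPotential φ g) {f : X → Y}
    (hf : Continuous f) : IsLocPotential (fun x y => φ (f x) (f y)) fun x => g (f x) := by
  intro x₀
  obtain ⟨u, hu, hφ⟩ := h (f x₀)
  exact ⟨f ⁻¹' u, hf.continuousAt.preimage_mem_nhds hu, fun x hx y hy => hφ _ hx _ hy⟩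

lemma IsLocPotential.add {φ φ' : X → X → A} {g g' : X → A} (h : IsLocPotential φ g)
    (h' : IsLocPotential φ' g') :
    IsLocPotential (fun x y => φ x y + φ' x y) fun x => g x + g' x := by
  intro x₀
  obtain ⟨u, hu, hφ⟩ := h x₀
  obtain ⟨u', hu', hφ'⟩ := h' x₀
  refine ⟨u ∩ u', Filter.inter_mem hu hu', fun x hx y hy => ?_⟩
  simp only [hφ x hx.1 y hy.1, hφ' x hx.2 y hy.2]
  abel

lemma IsLocPotential.neg {φ : X → X → A} {g : X → A} (h : IsLocPotential φ g) :
    IsLocPotential (fun x y => -φ x y) fun x => -g x := by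
  intro x₀
  obtain ⟨u, hu, hφ⟩ := h x₀
  refine ⟨u, hu, fun x hx y hy => ?_⟩
  simp only [hφ x hx y hy]
  abel

lemma mem_locZero_iff {n : ℕ} {φ : Cochain A X n} :
    φ ∈ locZero A X n ↔ ∀ x₀, ∃ u ∈ nhds x₀, ∀ s : Fin (n + 1) → X, (∀ i, s i ∈ u) → φ s = 0 := by
  constructor
  · rintro ⟨U, ⟨hUo, hUc⟩, hU⟩ x₀
    obtain ⟨u, hu, hx⟩ : x₀ ∈ ⋃₀ U := hUc ▸ mem_univ x₀
    exact ⟨u, (hUo u hu).mem_nhds hx, fun s hs => hU s ⟨u, hu, hs⟩⟩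
  · intro h
    refine ⟨{u | IsOpen u ∧ ∀ s : Fin (n + 1) → X, (∀ i, s i ∈ u) → φ s = 0},
      ⟨fun u hu => hu.1, eq_univ_of_forall fun x => ?_⟩, ?_⟩
    · obtain ⟨u, hu, hφ⟩ := h x
      obtain ⟨v, hvu, hvo, hxv⟩ := mem_nhds_iff.1 hu
      exact ⟨v, ⟨hvo, fun s hs => hφ s fun i => hvu (hs i)⟩, hxv⟩
    · rintro s ⟨u, hu, hs⟩
      exact hu.2 s hs

omit [TopologicalSpace X] in
lemma d_zero_apply (g : Cochain A X 0) (s : Fin 2 → X) :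
    d A X 0 g s = g ![s 1] - g ![s 0] := by
  have face_zero : s ∘ Fin.succ = ![s 1] := by ext i; fin_cases i; rfl
  have face_one : s ∘ Fin.succAbove (1 : Fin 2) = ![s 0] := by ext i; fin_cases i; rfl
  simp [d, Fin.sum_univ_succ, face_zero, face_one, sub_eq_add_neg]

omit [TopologicalSpace X] in
lemma d_one_apply (φ : Cochain A X 1) (s : Fin 3 → X) :
    d A X 1 φ s = φ ![s 1, s 2] - φ ![s 0, s 2] + φ ![s 0, s 1] := by
  have face_zero : s ∘ Fin.succ = ![s 1, s 2] := by ext i; fin_cases i <;> rfl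
  have face_one : s ∘ Fin.succAbove (1 : Fin 3) = ![s 0, s 2] := by ext i; fin_cases i <;> rfl
  have face_two : s ∘ Fin.succAbove (2 : Fin 3) = ![s 0, s 1] := by ext i; fin_cases i <;> rfl
  simp [d, Fin.sum_univ_succ, face_zero, face_one, face_two, sub_eq_add_neg, add_assoc]

lemma d_one_mem_locZero_iff (φ : Cochain A X 1) :
    d A X 1 φ ∈ locZero A X 2 ↔ IsLocCocycle fun x y => φ ![x, y] := by
  rw [mem_locZero_iff]
  refine forall_congr' fun x₀ => exists_congr fun u => and_congr_right fun _ => ⟨?_, ?_⟩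
  · intro h x hx y hy z hz
    have hd := h ![x, y, z] (by intro i; fin_cases i <;> assumption)
    rw [d_one_apply] at hd
    simp only [Matrix.cons_val] at hd
    rw [← sub_eq_zero, ← neg_eq_zero, ← hd]
    abel
  · intro h s hs
    have hφ : φ ![s 0, s 2] = φ ![s 0, s 1] + φ ![s 1, s 2] :=
      h (s 0) (hs 0) (s 1) (hs 1) (s 2) (hs 2)
    rw [d_one_apply, hφ]
    abel

lemma sub_d_zero_mem_locZero_iff (φ : Cochain A X 1) (g : Cochain A X 0) :
    φ - d A X 0 g ∈ locZero A X 1 ↔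
      IsLocPotential (fun x y => φ ![x, y]) fun x => g ![x] := by
  rw [mem_locZero_iff]
  refine forall_congr' fun x₀ => exists_congr fun u => and_congr_right fun _ => ⟨?_, ?_⟩
  · intro h x hx y hy
    have hφ := h ![x, y] (by intro i; fin_cases i <;> assumption)
    rw [Pi.sub_apply, d_zero_apply] at hφ
    exact sub_eq_zero.1 hφ
  · intro h s hs
    have hs_eq : s = ![s 0, s 1] := by ext i; fin_cases i <;> rfl
    rw [Pi.sub_apply, d_zero_apply, sub_eq_zero]
    exact (congrArg φ hs_eq).trans (h (s 0) (hs 0) (s 1) (hs 1))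

lemma mk_mem_cocycles_one_iff (φ : Cochain A X 1) :
    (QuotientAddGroup.mk φ : QC A X 1) ∈ cocycles A X 1 ↔ IsLocCocycle fun x y => φ ![x, y] := by
  rw [← d_one_mem_locZero_iff]
  exact QuotientAddGroup.eq_zero_iff (N := locZero A X 2) (d A X 1 φ)

lemma mk_mem_cobounds_one_iff (φ : Cochain A X 1) :
    (QuotientAddGroup.mk φ : QC A X 1) ∈ cobounds A X 1 ↔
      ∃ g : X → A, IsLocPotential (fun x y => φ ![x, y]) g := by
  constructor
  · rintro ⟨g, hg⟩
    obtain ⟨g, rfl⟩ := QuotientAddGroup.mk_surjective g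
    refine ⟨fun x => g ![x], (sub_d_zero_mem_locZero_iff φ g).1 ?_⟩
    rw [← QuotientAddGroup.eq_zero_iff, QuotientAddGroup.mk_sub, sub_eq_zero]
    exact hg.symm
  · rintro ⟨g, hg⟩
    refine ⟨QuotientAddGroup.mk fun s => g (s 0), ?_⟩
    have hφ := (sub_d_zero_mem_locZero_iff φ fun s => g (s 0)).2 hg
    rw [← QuotientAddGroup.eq_zero_iff, QuotientAddGroup.mk_sub, sub_eq_zero] at hφ
    exact hφ.symm

lemma injective_ASHmap_one_of_isLocPotential {f : X → Y} (hf : Continuous f)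
    (h : ∀ φ : Y → Y → A, IsLocCocycle φ →
      (∃ g : X → A, IsLocPotential (fun x y => φ (f x) (f y)) g) →
        ∃ g : Y → A, IsLocPotential φ g) :
    Injective (ASHmap A hf 1) := by
  rw [injective_iff_map_eq_zero]
  intro c hc
  obtain ⟨⟨q, hq⟩, rfl⟩ := QuotientAddGroup.mk_surjective c
  obtain ⟨φ, rfl⟩ := QuotientAddGroup.mk_surjective q
  have hpull : (QuotientAddGroup.mk (pull A f 1 φ) : QC A X 1) ∈ cobounds A X 1 :=
    (QuotientAddGroup.eq_zero_iff (N := (cobounds A X 1).comap (cocycles A X 1).subtype)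
      (pullZ A hf 1 ⟨_, hq⟩)).1 hc
  have hpull_apply : ∀ x y, pull A f 1 φ ![x, y] = φ ![f x, f y] := fun x y =>
    congrArg φ (by ext i; fin_cases i <;> rfl)
  simp only [mk_mem_cobounds_one_iff, hpull_apply] at hpull
  exact (QuotientAddGroup.eq_zero_iff
    (N := (cobounds A Y 1).comap (cocycles A Y 1).subtype) _).2
    ((mk_mem_cobounds_one_iff φ).2 (h _ ((mk_mem_cocycles_one_iff φ).1 hq) hpull))

lemma surjective_ASHmap_one_of_isLocPotential {f : X → Y} (hf : Continuous f)
    (h : ∀ ψ : X → X → A, IsLocCocycle ψ →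
      ∃ φ : Y → Y → A, IsLocCocycle φ ∧
        ∃ g : X → A, IsLocPotential (fun x y => φ (f x) (f y) - ψ x y) g) :
    Surjective (ASHmap A hf 1) := by
  intro c
  obtain ⟨⟨q, hq⟩, rfl⟩ := QuotientAddGroup.mk_surjective c
  obtain ⟨ψ, rfl⟩ := QuotientAddGroup.mk_surjective q
  obtain ⟨φ, hφ, hg⟩ := h _ ((mk_mem_cocycles_one_iff ψ).1 hq)
  have hφ_mem := (mk_mem_cocycles_one_iff fun s => φ (s 0) (s 1)).2 hφ
  have hdiff := (mk_mem_cobounds_one_iff (pull A f 1 (fun s => φ (s 0) (s 1)) - ψ)).2 hg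
  refine ⟨QuotientAddGroup.mk ⟨_, hφ_mem⟩, sub_eq_zero.1 ?_⟩
  exact (QuotientAddGroup.eq_zero_iff
    (N := (cobounds A X 1).comap (cocycles A X 1).subtype)
    (pullZ A hf 1 ⟨_, hφ_mem⟩ - ⟨_, hq⟩)).2 hdiff

end LocalCochains

section Uniform

variable {A : Type*} [AddCommGroup A] {X : Type*} [PseudoMetricSpace X] [CompactSpace X]

lemma IsLocCocycle.exists_uniform {φ : X → X → A} (hφ : IsLocCocycle φ) :
    ∃ δ > 0, ∀ x y z, dist x y < δ → dist x z < δ → φ x z = φ x y + φ y z := by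
  choose u hu hcocycle using hφ
  obtain ⟨δ, hδ, hball⟩ := Metric.uniformity_basis_dist.lebesgue_number_lemma_nhds isCompact_univ
    fun x _ => hu x
  refine ⟨δ, hδ, fun x y z hxy hxz => ?_⟩
  obtain ⟨x₀, hx₀⟩ := hball x trivial
  exact hcocycle x₀ x (hx₀ (by simpa [UniformSpace.ball])) y (hx₀ hxy) z (hx₀ hxz)

lemma IsLocPotential.exists_uniform {φ : X → X → A} {g : X → A} (h : IsLocPotential φ g) :
    ∃ δ > 0, ∀ x y, dist x y < δ → φ x y = g y - g x := by
  choose u hu hpotential using h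
  obtain ⟨δ, hδ, hball⟩ := Metric.uniformity_basis_dist.lebesgue_number_lemma_nhds isCompact_univ
    fun x _ => hu x
  refine ⟨δ, hδ, fun x y hxy => ?_⟩
  obtain ⟨x₀, hx₀⟩ := hball x trivial
  exact hpotential x₀ x (hx₀ (by simpa [UniformSpace.ball])) y (hx₀ hxy)

end Uniform

end AS

/-! ### Alexander–Spanier and simplicial cohomology -/

namespace FinSimpComplex

open AffineMap

variable {W : Type*} [Fintype W] [DecidableEq W] {K : FinSimpComplex W} {A : Type*}
  [AddCommGroup A]

section Geometry

lemma space_subset_stdSimplex : K.space ⊆ stdSimplex ℝ W :=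
  fun _ hy => ⟨hy.1, hy.2.1⟩

variable (K) in
lemma isCompact_space : IsCompact K.space := by
  have hspace : K.space =
      stdSimplex ℝ W ∩ ⋃ s ∈ K.faces, ⋂ v ∈ (sᶜ : Finset W), {y : W → ℝ | y v = 0} := by
    ext y
    simp only [space, stdSimplex, mem_ofPred_eq, mem_inter_iff, mem_iUnion, mem_iInter,
      exists_prop, Finset.mem_compl, and_assoc, not_imp_comm, ne_eq]
  rw [hspace]
  refine (isCompact_stdSimplex ℝ W).inter_right
    (K.faces.finite_toSet.isClosed_biUnion fun s _ => ?_)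
  exact isClosed_biInter fun v _ => isClosed_eq (continuous_apply v) continuous_const

instance : CompactSpace K.space :=
  isCompact_iff_compactSpace.1 K.isCompact_space

lemma face_of_subset {s t : Finset W} (ht : t ∈ K.faces) (hst : s ⊆ t) (hs : s.Nonempty) :
    s ∈ K.faces :=
  K.down_closed t ht s hst hs

omit [Fintype W] in
lemma eq_of_single_apply_ne_zero {w v : W} (hv : (Pi.single w 1 : W → ℝ) v ≠ 0) : v = w := by
  by_contra hne
  exact hv (Pi.single_eq_of_ne hne 1)

lemma single_mem_space {w : W} (hw : {w} ∈ K.faces) : (Pi.single w 1 : W → ℝ) ∈ K.space :=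
  ⟨(single_mem_stdSimplex ℝ w).1, (single_mem_stdSimplex ℝ w).2, _, hw, fun _ hv =>
    Finset.mem_singleton.2 (eq_of_single_apply_ne_zero hv)⟩

variable (K) in
/-- The vertices in `s` together with the support of `y` lie in a common face: the union of the
closed simplices containing `s` is the set of points joinable to `s`. -/
def Joinable (s : Finset W) (y : W → ℝ) : Prop :=
  ∃ t ∈ K.faces, s ⊆ t ∧ ∀ v, y v ≠ 0 → v ∈ t

lemma Joinable.mono {s s' : Finset W} {y : W → ℝ} (h : K.Joinable s y) (hs : s' ⊆ s) :
    K.Joinable s' y :=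
  let ⟨t, ht, hst, hyt⟩ := h
  ⟨t, ht, hs.trans hst, hyt⟩

lemma Joinable.singleton_mem_faces {s : Finset W} {y : W → ℝ} (h : K.Joinable s y) {w : W}
    (hw : w ∈ s) : {w} ∈ K.faces :=
  let ⟨_, ht, hst, _⟩ := h
  face_of_subset ht (Finset.singleton_subset_iff.2 (hst hw)) (Finset.singleton_nonempty w)

lemma joinable_of_subset_support {s : Finset W} {y : W → ℝ} (hy : y ∈ K.space)
    (hs : ∀ v ∈ s, y v ≠ 0) : K.Joinable s y :=
  let ⟨t, ht, hyt⟩ := hy.2.2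
  ⟨t, ht, fun v hv => hyt v (hs v hv), hyt⟩

lemma joinable_single {s : Finset W} {w : W} (h : insert w s ∈ K.faces) :
    K.Joinable s (Pi.single w 1) :=
  ⟨_, h, Finset.subset_insert _ _, fun _ hv =>
    eq_of_single_apply_ne_zero hv ▸ Finset.mem_insert_self w s⟩

/-- The segment from the vertex `w` to the point `y`, parametrised affinely. -/
def seg (w : W) (y : W → ℝ) : ℝ →ᵃ[ℝ] (W → ℝ) :=
  lineMap (Pi.single w 1) y

omit [Fintype W] in
lemma seg_zero (w : W) (y : W → ℝ) : seg w y 0 = Pi.single w 1 := lineMap_apply_zero _ _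

omit [Fintype W] in
lemma seg_one (w : W) (y : W → ℝ) : seg w y 1 = y := lineMap_apply_one _ _

omit [Fintype W] in
lemma seg_single (w : W) (t : ℝ) : seg w (Pi.single w 1) t = Pi.single w 1 :=
  lineMap_same_apply _ _

omit [Fintype W] in
lemma seg_apply_eq_zero {w v : W} {y : W → ℝ} (hv : v ≠ w) (hy : y v = 0) (t : ℝ) :
    seg w y t v = 0 := by
  simp [seg, lineMap_apply, hv, hy]

lemma Joinable.seg {s : Finset W} {y : W → ℝ} (h : K.Joinable s y) {w : W} (hw : w ∈ s) (t : ℝ) :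
    K.Joinable s (seg w y t) := by
  obtain ⟨u, hu, hsu, hyu⟩ := h
  refine ⟨u, hu, hsu, fun v hv => ?_⟩
  by_contra hvu
  exact hv (seg_apply_eq_zero (fun hvw => hvu (by rw [hvw]; exact hsu hw))
    (not_imp_comm.1 (hyu v) hvu) t)

lemma seg_mem_space {w : W} {y : W → ℝ} (hy : y ∈ K.space) (h : K.Joinable {w} y) {t : ℝ}
    (ht : t ∈ Icc (0 : ℝ) 1) : seg w y t ∈ K.space := by
  have hmem : seg w y t ∈ stdSimplex ℝ W := (convex_stdSimplex ℝ W).lineMap_mem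
    (single_mem_stdSimplex ℝ w) (space_subset_stdSimplex hy) ht
  obtain ⟨u, hu, -, hsupp⟩ := h.seg (Finset.mem_singleton_self w) t
  exact ⟨hmem.1, hmem.2, u, hu, hsupp⟩

lemma dist_seg_seg_le {w : W} {y : W → ℝ} (hy : y ∈ K.space) (t t' : ℝ) :
    dist (seg w y t) (seg w y t') ≤ dist t t' := by
  have hdiam : dist (Pi.single w 1) y ≤ 1 := (dist_pi_le_iff zero_le_one).2 fun v =>
    Real.dist_le_of_mem_Icc_01 (mem_Icc_of_mem_stdSimplex (single_mem_stdSimplex ℝ w) v)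
      (mem_Icc_of_mem_stdSimplex (space_subset_stdSimplex hy) v)
  rw [seg, dist_lineMap_lineMap]
  exact mul_le_of_le_one_right dist_nonneg hdiam

lemma dist_seg_le (w : W) (y y' : W → ℝ) {t : ℝ} (ht : t ∈ Icc (0 : ℝ) 1) :
    dist (seg w y t) (seg w y' t) ≤ dist y y' := by
  have hsub : seg w y t - seg w y' t = t • (y - y') := by
    simp only [seg, lineMap_apply_module]
    module
  rw [dist_eq_norm, hsub, norm_smul, Real.norm_of_nonneg ht.1, dist_eq_norm]
  exact mul_le_of_le_one_left (norm_nonneg _) ht.2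

lemma div_mem_Icc {i N : ℕ} (hi : i ≤ N) : (i / N : ℝ) ∈ Icc (0 : ℝ) 1 :=
  ⟨by positivity, div_le_one_of_le₀ (by exact_mod_cast hi) (by positivity)⟩

lemma dist_seg_step_lt {N : ℕ} {η : ℝ} (hN : 1 / (N : ℝ) < η) {w : W} {y : W → ℝ}
    (hy : y ∈ K.space) (i : ℕ) :
    dist (seg w y (i / N)) (seg w y ((i + 1 : ℕ) / N)) < η := by
  refine (dist_seg_seg_le hy _ _).trans_lt ?_
  have hstep : (i / N : ℝ) - ((i + 1 : ℕ) / N : ℝ) = -(1 / N) := by push_cast; ring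
  rw [Real.dist_eq, hstep, abs_neg, abs_of_nonneg (by positivity)]
  exact hN

lemma exists_one_div_lt {η : ℝ} (hη : 0 < η) : ∃ N : ℕ, N ≠ 0 ∧ 1 / (N : ℝ) < η := by
  obtain ⟨n, hn⟩ := exists_nat_one_div_lt hη
  exact ⟨n + 1, n.succ_ne_zero, by exact_mod_cast hn⟩

end Geometry

variable (K) in
/-- The cocycle identity for a degree-one simplicial cochain, on all triples of vertices spanning
a face. -/
def IsSimplicialCocycle (a : W → W → A) : Prop :=
  ∀ u v w, {u, v, w} ∈ K.faces → a u w = a u v + a v w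

variable (K) in
/-- The simplicial cochain `a` is the coboundary of `h`. -/
def IsSimplicialPotential (a : W → W → A) (h : W → A) : Prop :=
  ∀ u w, {u, w} ∈ K.faces → a u w = h w - h u

lemma IsSimplicialCocycle.mono {L : FinSimpComplex W} (hKL : K.faces ⊆ L.faces) {a : W → W → A}
    (ha : L.IsSimplicialCocycle a) : K.IsSimplicialCocycle a :=
  fun u v w h => ha u v w (hKL h)

section SegSum

variable (K) in
/-- The cocycle identity on triples of points of `|K|` of size less than `δ`, for a cochain that
is defined on all of `ℝ^W` (with irrelevant values outside `|K|`). -/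
def IsUniformCocycle (ψ : (W → ℝ) → (W → ℝ) → A) (δ : ℝ) : Prop :=
  ∀ x ∈ K.space, ∀ y ∈ K.space, ∀ z ∈ K.space, dist x y < δ → dist x z < δ →
    ψ x z = ψ x y + ψ y z

/-- The integral of `ψ` along the segment from `w` to `y`, subdivided into `N` steps. -/
def segSum (ψ : (W → ℝ) → (W → ℝ) → A) (N : ℕ) (w : W) (y : W → ℝ) : A :=
  ∑ i ∈ Finset.range N, ψ (seg w y (i / N)) (seg w y ((i + 1 : ℕ) / N))

variable {ψ : (W → ℝ) → (W → ℝ) → A} {δ : ℝ} {N : ℕ}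

lemma IsUniformCocycle.apply_self (hψ : K.IsUniformCocycle ψ δ) (hδ : 0 < δ) {x : W → ℝ}
    (hx : x ∈ K.space) : ψ x x = 0 := by
  simpa using hψ x hx x hx x hx (by simpa) (by simpa)

lemma segSum_single (hψ : K.IsUniformCocycle ψ δ) (hδ : 0 < δ) {w : W} (hw : {w} ∈ K.faces) :
    segSum ψ N w (Pi.single w 1) = 0 :=
  Finset.sum_eq_zero fun i _ => by
    rw [seg_single, seg_single, hψ.apply_self hδ (single_mem_space hw)]

lemma IsUniformCocycle.sub_eq_sub (hψ : K.IsUniformCocycle ψ δ) {x x' y y' : W → ℝ}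
    (hx : x ∈ K.space) (hx' : x' ∈ K.space) (hy : y ∈ K.space) (hy' : y' ∈ K.space)
    (hxx' : dist x x' < δ / 2) (hxy : dist x y < δ / 2) (hxy' : dist x' y' < δ / 2) :
    ψ y y' - ψ x x' = ψ x' y' - ψ x y := by
  have hdiag : dist x y' < δ := (dist_triangle x x' y').trans_lt (by linarith)
  have hδ : δ / 2 < δ := half_lt_self (by linarith [dist_nonneg (x := x) (y := y)])
  have via_x' := hψ x hx x' hx' y' hy' (hxx'.trans hδ) hdiag
  have via_y := hψ x hx y hy y' hy' (hxy.trans hδ) hdiag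
  rw [sub_eq_sub_iff_add_eq_add, add_comm, ← via_y, via_x', add_comm]

lemma segSum_sub_segSum (hψ : K.IsUniformCocycle ψ δ) (hδ : 0 < δ) (hN : 1 / (N : ℝ) < δ / 2)
    (hN₀ : N ≠ 0) {w : W} {x y : W → ℝ} (hx : x ∈ K.space) (hy : y ∈ K.space)
    (hjx : K.Joinable {w} x) (hjy : K.Joinable {w} y) (hxy : dist x y < δ / 2) :
    segSum ψ N w y - segSum ψ N w x = ψ x y := by
  set rung : ℕ → A := fun i => ψ (seg w x (i / N)) (seg w y (i / N)) with hrung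
  have hstep : ∀ i ∈ Finset.range N,
      ψ (seg w y (i / N)) (seg w y ((i + 1 : ℕ) / N)) -
        ψ (seg w x (i / N)) (seg w x ((i + 1 : ℕ) / N)) = rung (i + 1) - rung i := by
    intro i hi
    have ht := div_mem_Icc (Finset.mem_range.1 hi).le
    have ht' := div_mem_Icc (Nat.succ_le_of_lt (Finset.mem_range.1 hi))
    exact hψ.sub_eq_sub (seg_mem_space hx hjx ht) (seg_mem_space hx hjx ht')
      (seg_mem_space hy hjy ht) (seg_mem_space hy hjy ht') (dist_seg_step_lt hN hx i)
      ((dist_seg_le w x y ht).trans_lt hxy) ((dist_seg_le w x y ht').trans_lt hxy)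
  have hNℝ : (N : ℝ) ≠ 0 := by exact_mod_cast hN₀
  have hw := single_mem_space (hjx.singleton_mem_faces (Finset.mem_singleton_self w))
  rw [segSum, segSum, ← Finset.sum_sub_distrib, Finset.sum_congr rfl hstep, Finset.sum_range_sub]
  simp only [hrung, Nat.cast_zero, zero_div, seg_zero, div_self hNℝ, seg_one,
    hψ.apply_self hδ hw, sub_zero]

lemma segSum_eq_add (hψ : K.IsUniformCocycle ψ δ) (hδ : 0 < δ) (hN : 1 / (N : ℝ) < δ / 2)
    (hN₀ : N ≠ 0) {u w : W} {x : W → ℝ} (hx : x ∈ K.space) (hj : K.Joinable {u, w} x) :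
    segSum ψ N u x = segSum ψ N u (Pi.single w 1) + segSum ψ N w x := by
  have hu : ({u} : Finset W) ⊆ {u, w} := by simp
  have hw : ({w} : Finset W) ⊆ {u, w} := by simp
  have hconst : ∀ i ≤ N, segSum ψ N u (seg w x (i / N)) - segSum ψ N w (seg w x (i / N)) =
      segSum ψ N u (Pi.single w 1) := by
    intro i
    induction i with
    | zero =>
      intro _
      simp [seg_zero, segSum_single hψ hδ (hj.singleton_mem_faces (w := w) (by simp))]
    | succ i ih =>
      intro hi
      have hjoin := fun t => hj.seg (w := w) (by simp) t
      have hmem := seg_mem_space hx (hj.mono hw) (div_mem_Icc (Nat.le_of_succ_le hi))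
      have hmem' := seg_mem_space hx (hj.mono hw) (div_mem_Icc hi)
      have hdist := dist_seg_step_lt hN (w := w) hx i
      rw [← ih (Nat.le_of_succ_le hi), sub_eq_sub_iff_sub_eq_sub,
        segSum_sub_segSum hψ hδ hN hN₀ hmem hmem' ((hjoin _).mono hu) ((hjoin _).mono hu) hdist,
        segSum_sub_segSum hψ hδ hN hN₀ hmem hmem' ((hjoin _).mono hw) ((hjoin _).mono hw) hdist]
  have hend := hconst N le_rfl
  rw [div_self (by exact_mod_cast hN₀), seg_one] at hend
  rw [← hend, sub_add_cancel]

end SegSum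

section SpaceCochain

open AS

variable [Nonempty W]

/-- A vertex at which the barycentric coordinates of `y` are maximal. -/
def maxVertex (y : W → ℝ) : W :=
  (Finite.exists_max y).choose

omit [DecidableEq W] in
lemma le_maxVertex (y : W → ℝ) (v : W) : y v ≤ y (maxVertex y) :=
  (Finite.exists_max y).choose_spec v

lemma apply_maxVertex_pos {y : W → ℝ} (hy : y ∈ K.space) : 0 < y (maxVertex y) := by
  by_contra! hle
  have hzero : ∀ v, y v = 0 := fun v => le_antisymm ((le_maxVertex y v).trans hle) (hy.1 v)
  simpa [hzero] using hy.2.1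

lemma maxVertex_single (w : W) : maxVertex (Pi.single w 1) = w := by
  by_contra hne
  have hle := le_maxVertex (Pi.single w 1) w
  rw [Pi.single_eq_same, Pi.single_eq_of_ne hne] at hle
  linarith

lemma maxVertex_seg_single {u w : W} {t : ℝ} (hmem : seg u (Pi.single w 1) t ∈ K.space) :
    maxVertex (seg u (Pi.single w 1) t) ∈ ({u, w} : Finset W) := by
  rw [Finset.mem_insert, Finset.mem_singleton]
  by_contra! hne
  exact (apply_maxVertex_pos hmem).ne'
    (seg_apply_eq_zero hne.1 (Pi.single_eq_of_ne hne.2 1) t)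

lemma exists_nhds_apply_maxVertex_ne_zero (x₀ : K.space) :
    ∃ u ∈ nhds x₀, ∀ x ∈ u, ∀ y ∈ u, x.1 (maxVertex y.1) ≠ 0 := by
  have coord_continuous : ∀ v, Continuous fun x : K.space => x.1 v :=
    fun v => (continuous_apply v).comp continuous_subtype_val
  have hsupp : ∀ᶠ x in nhds x₀, ∀ v, x₀.1 v ≠ 0 → x.1 v ≠ 0 :=
    Filter.eventually_all.2 fun v => Filter.eventually_imp_distrib_left.2 fun hv =>
      (coord_continuous v).continuousAt.eventually_ne hv
  have hmax : ∀ᶠ y in nhds x₀, ∀ v, x₀.1 v = 0 → y.1 v < y.1 (maxVertex x₀.1) :=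
    Filter.eventually_all.2 fun v => Filter.eventually_imp_distrib_left.2 fun hv =>
      (coord_continuous v).continuousAt.eventually_lt (coord_continuous _).continuousAt
        (hv ▸ apply_maxVertex_pos x₀.2)
  refine ⟨_, hsupp.and hmax, fun x hx y hy => hx.1 _ fun hzero => ?_⟩
  exact (le_maxVertex y.1 (maxVertex x₀.1)).not_gt (hy.2 _ hzero)

lemma exists_nhds_maxVertex_mem_face (x₀ : K.space) :
    ∃ u ∈ nhds x₀, ∃ t ∈ K.faces, ∀ x ∈ u, maxVertex x.1 ∈ t := by
  obtain ⟨u, hu, hne⟩ := exists_nhds_apply_maxVertex_ne_zero x₀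
  obtain ⟨t, ht, hsupp⟩ := x₀.2.2.2
  exact ⟨u, hu, t, ht, fun x hx => hsupp _ (hne x₀ (mem_of_mem_nhds hu) x hx)⟩

variable (K) in
/-- The Alexander–Spanier cochain on `|K|` induced by a simplicial cochain: the pullback along the
(discontinuous) map to the vertex with the largest barycentric coordinate. -/
def spaceCochain (a : W → W → A) (x y : K.space) : A :=
  a (maxVertex x.1) (maxVertex y.1)

lemma IsSimplicialCocycle.isLocCocycle {a : W → W → A} (ha : K.IsSimplicialCocycle a) :
    IsLocCocycle (K.spaceCochain a) := by
  intro x₀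
  obtain ⟨u, hu, t, ht, hmem⟩ := exists_nhds_maxVertex_mem_face x₀
  refine ⟨u, hu, fun x hx y hy z hz => ha _ _ _ (face_of_subset ht ?_ (by simp))⟩
  simp only [Finset.insert_subset_iff, Finset.singleton_subset_iff]
  exact ⟨hmem x hx, hmem y hy, hmem z hz⟩

lemma IsSimplicialPotential.isLocPotential {a : W → W → A} {h : W → A}
    (ha : K.IsSimplicialPotential a h) :
    IsLocPotential (K.spaceCochain a) fun x => h (maxVertex x.1) := by
  intro x₀
  obtain ⟨u, hu, t, ht, hmem⟩ := exists_nhds_maxVertex_mem_face x₀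
  refine ⟨u, hu, fun x hx y hy => ha _ _ (face_of_subset ht ?_ (by simp))⟩
  simp only [Finset.insert_subset_iff, Finset.singleton_subset_iff]
  exact ⟨hmem x hx, hmem y hy⟩

omit [Nonempty W] in
lemma IsUniformCocycle.isSimplicialCocycle_segSum {ψ : (W → ℝ) → (W → ℝ) → A} {δ : ℝ} {N : ℕ}
    (hψ : K.IsUniformCocycle ψ δ) (hδ : 0 < δ) (hN : 1 / (N : ℝ) < δ / 2) (hN₀ : N ≠ 0) :
    K.IsSimplicialCocycle fun u w => segSum ψ N u (Pi.single w 1) := by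
  intro u v w h
  refine segSum_eq_add hψ hδ hN hN₀
    (single_mem_space (face_of_subset h (by simp) (Finset.singleton_nonempty w)))
    (joinable_single ?_)
  rwa [show insert w {u, v} = ({u, v, w} : Finset W) by ext; simp; tauto]

lemma IsUniformCocycle.isLocPotential_segSum {ψ : (W → ℝ) → (W → ℝ) → A} {δ : ℝ} {N : ℕ}
    (hψ : K.IsUniformCocycle ψ δ) (hδ : 0 < δ) (hN : 1 / (N : ℝ) < δ / 2) (hN₀ : N ≠ 0) :
    IsLocPotential (fun x y : K.space => ψ x y -
      K.spaceCochain (fun u w => segSum ψ N u (Pi.single w 1)) x y)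
      fun x => segSum ψ N (maxVertex x.1) x.1 := by
  intro x₀
  obtain ⟨u, hu, hne⟩ := exists_nhds_apply_maxVertex_ne_zero x₀
  refine ⟨u ∩ Metric.ball x₀ (δ / 4), Filter.inter_mem hu
    (Metric.ball_mem_nhds _ (by linarith)), ?_⟩
  rintro x ⟨hxu, hxb⟩ y ⟨hyu, hyb⟩
  have hdist : dist x y < δ / 2 := by
    rw [Metric.mem_ball] at hxb hyb
    linarith [dist_triangle_right x y x₀]
  have along_y := segSum_sub_segSum hψ hδ hN hN₀ (w := maxVertex x.1) x.2 y.2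
    (joinable_of_subset_support x.2 (by simpa using hne x hxu x hxu))
    (joinable_of_subset_support y.2 (by simpa using hne y hyu x hxu)) hdist
  have around_y := segSum_eq_add hψ hδ hN hN₀ (u := maxVertex x.1) (w := maxVertex y.1) y.2
    (joinable_of_subset_support y.2 (by simpa using ⟨hne y hyu x hxu, hne y hyu y hyu⟩))
  simp only [spaceCochain]
  rw [← along_y, around_y]
  abel

lemma _root_.AS.IsLocCocycle.exists_isSimplicialCocycle {φ : K.space → K.space → A}
    (hφ : IsLocCocycle φ) : ∃ a : W → W → A, K.IsSimplicialCocycle a ∧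
      ∃ g, IsLocPotential (fun x y => φ x y - K.spaceCochain a x y) g := by
  obtain ⟨ψ, rfl⟩ : ∃ ψ : (W → ℝ) → (W → ℝ) → A, (fun x y : K.space => ψ x y) = φ :=
    ⟨fun x y => extend Subtype.val (fun x => extend Subtype.val (φ x) 0 y) 0 x, by
      ext x y; simp⟩
  obtain ⟨δ, hδ, hunif⟩ := hφ.exists_uniform
  have hψ : K.IsUniformCocycle ψ δ := fun x hx y hy z hz =>
    hunif ⟨x, hx⟩ ⟨y, hy⟩ ⟨z, hz⟩
  obtain ⟨N, hN₀, hN⟩ := exists_one_div_lt (half_pos hδ)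
  exact ⟨_, hψ.isSimplicialCocycle_segSum hδ hN hN₀, _, hψ.isLocPotential_segSum hδ hN hN₀⟩

omit [Nonempty W] in
lemma IsSimplicialCocycle.eq_add_of_mem_pair {a : W → W → A} (ha : K.IsSimplicialCocycle a)
    {u w : W} (huw : {u, w} ∈ K.faces) {v v' : W} (hv : v ∈ ({u, w} : Finset W))
    (hv' : v' ∈ ({u, w} : Finset W)) : a u v' = a u v + a v v' :=
  ha _ _ _ (face_of_subset huw (by simp [Finset.insert_subset_iff, hv, hv']) (by simp))

omit [Nonempty W] in
lemma IsSimplicialCocycle.apply_self {a : W → W → A} (ha : K.IsSimplicialCocycle a) {u : W}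
    (hu : {u} ∈ K.faces) : a u u = 0 := by
  simpa using ha u u u (by simpa)

lemma IsSimplicialCocycle.isSimplicialPotential_of_uniform {a : W → W → A}
    (ha : K.IsSimplicialCocycle a) {g : (W → ℝ) → A} {δ : ℝ} (hδ : 0 < δ)
    (hg : ∀ x ∈ K.space, ∀ y ∈ K.space, dist x y < δ →
      a (maxVertex x) (maxVertex y) = g y - g x) :
    K.IsSimplicialPotential a fun w => g (Pi.single w 1) := by
  intro u w huw
  obtain ⟨N, hN₀, hN⟩ := exists_one_div_lt hδ
  have hu : {u} ∈ K.faces := face_of_subset huw (by simp) (by simp)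
  have hw : (Pi.single w 1 : W → ℝ) ∈ K.space :=
    single_mem_space (face_of_subset huw (by simp) (by simp))
  have hj : K.Joinable {u} (Pi.single w 1 : W → ℝ) :=
    joinable_single (by rwa [Finset.pair_comm])
  set c : ℕ → W → ℝ := fun i => seg u (Pi.single w 1) (i / N) with hc
  have hmem : ∀ i ≤ N, c i ∈ K.space := fun i hi => seg_mem_space hw hj (div_mem_Icc hi)
  have hstart : c 0 = Pi.single u 1 := by simp [hc, seg_zero]
  have hend : c N = Pi.single w 1 := by
    simp only [hc, div_self (Nat.cast_ne_zero.2 hN₀ : (N : ℝ) ≠ 0), seg_one]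
  have along : ∀ i ≤ N, a u (maxVertex (c i)) = g (c i) - g (c 0) := by
    intro i
    induction i with
    | zero =>
      intro _
      rw [hstart, maxVertex_single, sub_self, ha.apply_self hu]
    | succ i ih =>
      intro hi
      have hi' := Nat.le_of_succ_le hi
      rw [ha.eq_add_of_mem_pair huw (maxVertex_seg_single (hmem i hi'))
        (maxVertex_seg_single (hmem _ hi)), ih hi',
        hg _ (hmem i hi') _ (hmem _ hi) (dist_seg_step_lt hN hw i)]
      abel
  simpa only [hstart, hend, maxVertex_single] using along N le_rfl

lemma IsSimplicialCocycle.exists_isSimplicialPotential {a : W → W → A}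
    (ha : K.IsSimplicialCocycle a) {g : K.space → A} (hg : IsLocPotential (K.spaceCochain a) g) :
    ∃ h, K.IsSimplicialPotential a h := by
  obtain ⟨g, rfl⟩ : ∃ g' : (W → ℝ) → A, (fun x : K.space => g' x) = g :=
    ⟨extend Subtype.val g 0, by ext x; simp⟩
  obtain ⟨δ, hδ, hunif⟩ := hg.exists_uniform
  exact ⟨_, ha.isSimplicialPotential_of_uniform hδ fun x hx y hy => hunif ⟨x, hx⟩ ⟨y, hy⟩⟩

end SpaceCochain

section Restriction

open AS

variable {L₁ L₂ : FinSimpComplex W}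

lemma space_mono (hL : L₁.faces ⊆ L₂.faces) : L₁.space ⊆ L₂.space :=
  fun _ ⟨hnonneg, hsum, s, hs, hsupp⟩ => ⟨hnonneg, hsum, s, hL hs, hsupp⟩

variable [Nonempty W] (hL : L₁.faces ⊆ L₂.faces)

include hL

lemma injective_ASHmap_one_inclusion
    (hpot : ∀ a : W → W → A, L₂.IsSimplicialCocycle a → ∀ h, L₁.IsSimplicialPotential a h →
      ∃ H, L₂.IsSimplicialPotential a H) :
    Injective (ASHmap A (continuous_inclusion (space_mono hL)) 1) := by
  refine injective_ASHmap_one_of_isLocPotential _ fun φ hφ ⟨g, hg⟩ => ?_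
  obtain ⟨a, ha, g', hg'⟩ := hφ.exists_isSimplicialCocycle
  have ha₁ : IsLocPotential (L₁.spaceCochain a)
      fun x => g x + -g' (inclusion (space_mono hL) x) := by
    convert hg.add (hg'.comp (continuous_inclusion (space_mono hL))).neg using 3
    exact (add_neg_eq_iff_eq_add.2 (add_sub_cancel _ _).symm).symm
  obtain ⟨h, hh⟩ := (ha.mono hL).exists_isSimplicialPotential ha₁
  obtain ⟨H, hH⟩ := hpot a ha h hh
  exact ⟨_, by simpa only [sub_add_cancel] using hg'.add hH.isLocPotential⟩

lemma surjective_ASHmap_one_inclusion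
    (hext : ∀ a : W → W → A, L₁.IsSimplicialCocycle a →
      ∃ a', L₂.IsSimplicialCocycle a' ∧ ∀ u w, {u, w} ∈ L₁.faces → a' u w = a u w) :
    Surjective (ASHmap A (continuous_inclusion (space_mono hL)) 1) := by
  refine surjective_ASHmap_one_of_isLocPotential _ fun ψ hψ => ?_
  obtain ⟨a, ha, g, hg⟩ := hψ.exists_isSimplicialCocycle
  obtain ⟨a', ha', heq⟩ := hext a ha
  refine ⟨_, ha'.isLocCocycle, fun x => (0 : W → A) (maxVertex x.1) + -g x, ?_⟩
  have hdiff : L₁.IsSimplicialPotential (fun u w => a' u w - a u w) 0 :=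
    fun u w huw => by simp [heq u w huw]
  convert hdiff.isLocPotential.add hg.neg using 3
  simp only [spaceCochain]
  abel

end Restriction

end FinSimpComplex

/-! ### The poset of vertices -/

section PosetCochains

variable {P A : Type*} [Preorder P] [AddCommGroup A] {S : Set P} {a : P → P → A}

/-- The cocycle identity on `S` for a degree-one cochain on the order complex of a poset, whose
edges are the comparable pairs. -/
def IsCocycleOn (S : Set P) (a : P → P → A) : Prop :=
  ∀ u ∈ S, ∀ v ∈ S, ∀ w ∈ S, u ≤ v → v ≤ w → a u w = a u v + a v w

/-- On the order complex of `S`, the cochain `a` is the coboundary of `h`. -/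
def IsPotentialOn (S : Set P) (a : P → P → A) (h : P → A) : Prop :=
  ∀ u ∈ S, ∀ w ∈ S, u ≤ w → a u w = h w - h u

lemma IsCocycleOn.apply_self (ha : IsCocycleOn S a) {u : P} (hu : u ∈ S) : a u u = 0 := by
  simpa using ha u hu u hu u hu le_rfl le_rfl

lemma IsCocycleOn.add_eq_add (ha : IsCocycleOn S a) {u v v' w : P} (hu : u ∈ S) (hv : v ∈ S)
    (hv' : v' ∈ S) (hw : w ∈ S) (huv : u ≤ v) (hvw : v ≤ w) (huv' : u ≤ v') (hvw' : v' ≤ w) :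
    a u v + a v w = a u v' + a v' w := by
  rw [← ha u hu v hv w hw huv hvw, ha u hu v' hv' w hw huv' hvw']

/-- The value at `u` of the potential normalised at `c`, computed through a common upper bound
`u'` of `c` and `u`. -/
def conePot (a : P → P → A) (c u u' : P) : A :=
  a c u' - a u u'

lemma IsCocycleOn.conePot_sub_conePot (ha : IsCocycleOn S a) {c u u' w w' : P} (hc : c ∈ S)
    (hu : u ∈ S) (hu' : u' ∈ S) (hw : w ∈ S) (hw' : w' ∈ S) (hcu' : c ≤ u') (huu' : u ≤ u')
    (hww' : w ≤ w') (huw : u ≤ w) (huw' : u' ≤ w') :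
    conePot a c w w' - conePot a c u u' = a u w := by
  have from_c := ha c hc u' hu' w' hw' hcu' huw'
  have from_u := ha.add_eq_add hu hu' hw hw' huu' huw' huw hww'
  rw [conePot, conePot, from_c, eq_sub_of_add_eq' from_u]
  abel

lemma IsCocycleOn.exists_isPotentialOn_of_cone (ha : IsCocycleOn S a) {c : P} {f : P → P}
    (hc : c ∈ S) (hfS : MapsTo f S S) (hf : MonotoneOn f S) (hle : ∀ w ∈ S, w ≤ f w)
    (hcf : ∀ w ∈ S, c ≤ f w) : ∃ h, IsPotentialOn S a h :=
  ⟨fun w => conePot a c w (f w), fun u hu w hw huw =>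
    (ha.conePot_sub_conePot hc hu (hfS hu) hw (hfS hw) (hcf u hu) (hle u hu) (hle w hw) huw
      (hf hu hw huw)).symm⟩

end PosetCochains

namespace Resolution

section Paths

variable (A V : Type*) [AddCommGroup A]

/-- Alternating `1`-cochains on the full simplex with vertex set `V`. -/
abbrev AltCochain : Type _ :=
  {α : V → V → A // ∀ u v, α u v = -α v u ∧ α u u = 0}

/-- The group of shifts: all functions, not only the additive ones, on the alternating
cochains. -/
abbrev Coeff : Type _ :=
  AltCochain A V → A

variable {V}

/-- The universal edge cochain: evaluation of an alternating cochain at the edge `uv`. -/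
def edge (u v : V) : Coeff A V :=
  fun α => α.1 u v

lemma neg_edge (u v : V) : -edge A u v = edge A v u := by
  ext α
  exact (α.2 v u).1.symm

variable {A}

/-- There is an edge path in `S` along which the universal edge cochain sums up to the third
argument. -/
inductive Path (S : Set V) : V → V → Coeff A V → Prop
  | nil (v : V) : Path S v v 0
  | cons {u v w : V} {ζ : Coeff A V} :
      Path S u v ζ → v ∈ S → w ∈ S → Path S u w (edge A v w + ζ)

namespace Path

variable {S T : Set V} {u v w : V} {ζ ξ : Coeff A V}

lemma single (hu : u ∈ S) (hv : v ∈ S) : Path S u v (edge A u v) := by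
  simpa only [add_zero] using (Path.nil (A := A) u).cons hu hv

lemma trans (h : Path S u v ζ) (h' : Path S v w ξ) : Path S u w (ξ + ζ) := by
  induction h' with
  | nil => simpa only [zero_add] using h
  | cons _ hv hw ih => rw [add_assoc]; exact ih.cons hv hw

lemma symm (h : Path S u v ζ) : Path S v u (-ζ) := by
  induction h with
  | nil => simpa only [neg_zero] using Path.nil _
  | cons _ hv hw ih =>
    rw [neg_add_rev, neg_edge]
    exact (single hw hv).trans ih

lemma mono (hST : S ⊆ T) (h : Path S u v ζ) : Path T u v ζ := by
  induction h with
  | nil => exact .nil _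
  | cons _ hv hw ih => exact ih.cons (hST hv) (hST hw)

lemma mem_iff (h : Path S u v ζ) : u ∈ S ↔ v ∈ S := by
  induction h with
  | nil => exact Iff.rfl
  | cons _ hv hw ih => exact ih.trans ⟨fun _ => hw, fun _ => hv⟩

end Path

end Paths

section Vertices

variable {V : Type*}

/-- The common vertices of a family of simplices. -/
def core (F : Finset (Finset V)) : Set V :=
  {v | ∀ τ ∈ F, v ∈ τ}

lemma core_anti {F F' : Finset (Finset V)} (h : F ⊆ F') : core F' ⊆ core F :=
  fun _ hv τ hτ => hv τ (h hτ)

lemma mem_core_singleton {τ : Finset V} {v : V} : v ∈ core {τ} ↔ v ∈ τ := by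
  simp [core]

variable (A V : Type*) [AddCommGroup A]

/-- Representatives of the vertices of the resolution: a flag of simplices (a vertex of the second
barycentric subdivision of the base), a base vertex, and a shift for each member of the flag. -/
structure Rep where
  flag : Finset (Finset V)
  base : V
  shift : Finset V → Coeff A V

variable {A V}

/-- Larger flags are larger. Moving the base vertex along a path in the core of the flag is
compensated by the integral of the universal edge cochain; shifts count only at the simplices with
at least three vertices, the boundaries of the others needing no resolution. -/
instance : Preorder (Rep A V) where
  le x y := x.flag ⊆ y.flag ∧ ∃ ζ, Path (core x.flag) y.base x.base ζ ∧
    ∀ τ ∈ x.flag, 3 ≤ τ.card → x.shift τ = ζ + y.shift τ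
  le_refl x := ⟨subset_rfl, 0, .nil _, fun _ _ _ => (zero_add _).symm⟩
  le_trans x y z := by
    rintro ⟨hxy, ζ, hζ, hshift⟩ ⟨hyz, ξ, hξ, hshift'⟩
    refine ⟨hxy.trans hyz, ζ + ξ, (hξ.mono (core_anti hxy)).trans hζ, fun τ hτ hc => ?_⟩
    rw [hshift τ hτ hc, hshift' τ (hxy hτ) hc, add_assoc]

variable (A V) in
/-- The poset in which the vertices of the resolution lie: representatives up to mutual
comparability. -/
abbrev Vert : Type _ :=
  Antisymmetrization (Rep A V) (· ≤ ·)

/-- The vertex represented by a flag, a base vertex and a shift. -/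
def mk (F : Finset (Finset V)) (v : V) (b : Finset V → Coeff A V) : Vert A V :=
  toAntisymmetrization (· ≤ ·) ⟨F, v, b⟩

/-- A chosen representative of a vertex. -/
def rep (w : Vert A V) : Rep A V :=
  ofAntisymmetrization (· ≤ ·) w

/-- The flag of a vertex. -/
def flag (w : Vert A V) : Finset (Finset V) :=
  (rep w).flag

variable {F F' : Finset (Finset V)} {v v' : V} {b b' : Finset V → Coeff A V} {w w' : Vert A V}

lemma exists_eq_mk (w : Vert A V) : ∃ F v b, w = mk F v b := by
  induction w using Antisymmetrization.ind with
  | _ x => exact ⟨x.flag, x.base, x.shift, rfl⟩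

lemma mk_rep (w : Vert A V) : mk (rep w).flag (rep w).base (rep w).shift = w :=
  toAntisymmetrization_ofAntisymmetrization _ w

lemma mk_le_mk_iff : mk F v b ≤ mk F' v' b' ↔ F ⊆ F' ∧ ∃ ζ, Path (core F) v' v ζ ∧
    ∀ τ ∈ F, 3 ≤ τ.card → b τ = ζ + b' τ :=
  Iff.rfl

lemma mk_mono (v : V) (b : Finset V → Coeff A V) (h : F ⊆ F') : mk F v b ≤ mk F' v b :=
  ⟨h, 0, .nil _, fun _ _ _ => (zero_add _).symm⟩

lemma mk_eq_mk_of_path {ζ : Coeff A V} (h : Path (core F) v' v ζ)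
    (hb : ∀ τ ∈ F, 3 ≤ τ.card → b τ = ζ + b' τ) : mk F v b = mk F v' b' :=
  le_antisymm (mk_le_mk_iff.2 ⟨subset_rfl, ζ, h, hb⟩)
    (mk_le_mk_iff.2 ⟨subset_rfl, -ζ, h.symm, fun τ hτ hc => by
      rw [hb τ hτ hc, neg_add_cancel_left]⟩)

lemma mk_eq_mk_iff : mk F v b = mk F' v' b' ↔ F = F' ∧ ∃ ζ, Path (core F) v' v ζ ∧
    ∀ τ ∈ F, 3 ≤ τ.card → b τ = ζ + b' τ := by
  refine ⟨fun h => ?_, ?_⟩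
  · obtain ⟨hsub, hpath⟩ := mk_le_mk_iff.1 h.le
    exact ⟨hsub.antisymm (mk_le_mk_iff.1 h.ge).1, hpath⟩
  · rintro ⟨rfl, ζ, h, hb⟩
    exact mk_eq_mk_of_path h hb

lemma mk_congr (v : V) (h : ∀ τ ∈ F, 3 ≤ τ.card → b τ = b' τ) : mk F v b = mk F v b' :=
  mk_eq_mk_of_path (.nil v) (by simpa only [zero_add] using h)

lemma mk_vadd (b : Finset V → Coeff A V) (hv : v ∈ core F) (hv' : v' ∈ core F) :
    mk F v' (edge A v v' +ᵥ b) = mk F v b :=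
  mk_eq_mk_of_path (.single hv hv') fun _ _ _ => rfl

lemma flag_mk : flag (mk F v b) = F :=
  (mk_eq_mk_iff.1 (mk_rep (mk F v b))).1

lemma exists_path_rep (F : Finset (Finset V)) (v : V) (b : Finset V → Coeff A V) :
    ∃ ζ, Path (core F) v (rep (mk F v b)).base ζ ∧
      ∀ τ ∈ F, 3 ≤ τ.card → (rep (mk F v b)).shift τ = ζ + b τ := by
  obtain ⟨hflag, h⟩ := mk_eq_mk_iff.1 (mk_rep (mk F v b))
  rwa [hflag] at h

lemma exists_of_le_mk (h : w ≤ mk F v b) : ∃ F₀ ⊆ F, w = mk F₀ v b := by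
  obtain ⟨F₀, v₀, b₀, rfl⟩ := exists_eq_mk w
  obtain ⟨hsub, ζ, hζ, hshift⟩ := mk_le_mk_iff.1 h
  exact ⟨F₀, hsub, mk_eq_mk_of_path hζ hshift⟩

lemma exists_common_base (h : w ≤ w') :
    ∃ F F' v b, F ⊆ F' ∧ w = mk F v b ∧ w' = mk F' v b := by
  obtain ⟨F', v, b, rfl⟩ := exists_eq_mk w'
  obtain ⟨F, hF, rfl⟩ := exists_of_le_mk h
  exact ⟨F, F', v, b, hF, rfl, rfl⟩

lemma flag_mono (h : w ≤ w') : flag w ⊆ flag w' := by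
  obtain ⟨F, F', v, b, hF, rfl, rfl⟩ := exists_common_base h
  simpa only [flag_mk] using hF

lemma eq_of_le_of_flag_eq (h : w ≤ w') (hf : flag w = flag w') : w = w' := by
  obtain ⟨F, F', v, b, -, rfl, rfl⟩ := exists_common_base h
  simp only [flag_mk] at hf
  rw [hf]

end Vertices

section Over

variable {A V : Type*} [AddCommGroup A] {F F' : Finset (Finset V)} {u v : V}
  {b : Finset V → Coeff A V} {w w' : Vert A V} {σ τ : Finset V}

/-- `F` is a flag of faces of `σ`, all of which contain `v`. -/
structure IsBasedFlag (σ : Finset V) (F : Finset (Finset V)) (v : V) : Prop where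
  nonempty : F.Nonempty
  chain : IsChain (· ⊆ ·) (F : Set (Finset V))
  mem_core : v ∈ core F
  subset : ∀ τ ∈ F, τ ⊆ σ

namespace IsBasedFlag

lemma mono (h : IsBasedFlag σ F' v) (hF : F ⊆ F') (hne : F.Nonempty) : IsBasedFlag σ F v :=
  ⟨hne, h.chain.mono (Finset.coe_subset.2 hF), core_anti hF h.mem_core,
    fun τ hτ => h.subset τ (hF hτ)⟩

lemma rebase (h : IsBasedFlag σ F v) (hu : u ∈ core F) : IsBasedFlag σ F u :=
  ⟨h.nonempty, h.chain, hu, h.subset⟩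

lemma core_subset (h : IsBasedFlag σ F v) : core F ⊆ σ := fun _ hu =>
  let ⟨τ, hτ⟩ := h.nonempty
  h.subset τ hτ (hu τ hτ)

lemma base_mem (h : IsBasedFlag σ F v) : v ∈ σ :=
  h.core_subset h.mem_core

lemma singleton (hv : v ∈ τ) (hτ : τ ⊆ σ) : IsBasedFlag σ {τ} v :=
  ⟨Finset.singleton_nonempty τ, by simp, mem_core_singleton.2 hv, by simpa⟩

variable [DecidableEq V]

lemma insert (h : IsBasedFlag σ F v) (hv : v ∈ τ) (hτ : τ ⊆ σ)
    (hcomp : ∀ τ' ∈ F, τ ⊆ τ' ∨ τ' ⊆ τ) : IsBasedFlag σ (insert τ F) v where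
  nonempty := Finset.insert_nonempty _ _
  chain := by
    rw [Finset.coe_insert]
    exact h.chain.insert fun τ' hτ' _ => hcomp τ' hτ'
  mem_core := Finset.forall_mem_insert _ _ _ |>.2 ⟨hv, h.mem_core⟩
  subset := Finset.forall_mem_insert _ _ _ |>.2 ⟨hτ, h.subset⟩

lemma insert_of_subset_core (h : IsBasedFlag σ F v) (hv : v ∈ τ) (hτ : (τ : Set V) ⊆ core F) :
    IsBasedFlag σ (Insert.insert τ F) v :=
  h.insert hv (Finset.coe_subset.1 (hτ.trans h.core_subset))
    fun _ hτ' => .inl fun _ hx => hτ hx _ hτ'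

lemma insert_self (h : IsBasedFlag σ F v) : IsBasedFlag σ (Insert.insert σ F) v :=
  h.insert h.base_mem subset_rfl fun τ hτ => .inr (h.subset τ hτ)

lemma insert_singleton (h : IsBasedFlag σ F v) : IsBasedFlag σ (Insert.insert {v} F) v :=
  h.insert_of_subset_core (Finset.mem_singleton_self v) (by simpa using h.mem_core)

lemma erase_nonempty (h : IsBasedFlag σ F v) (hF : F ≠ {τ}) : (F.erase τ).Nonempty := by
  rw [Finset.nonempty_iff_ne_empty, Ne, Finset.erase_eq_empty_iff]
  exact not_or.2 ⟨h.nonempty.ne_empty, hF⟩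

lemma erase (h : IsBasedFlag σ F v) (hF : F ≠ {τ}) : IsBasedFlag σ (F.erase τ) v :=
  h.mono (Finset.erase_subset _ _) (h.erase_nonempty hF)

end IsBasedFlag

/-- The vertices of the resolution lying over the simplex `σ`. -/
def Over (σ : Finset V) : Set (Vert A V) :=
  {w | IsBasedFlag σ (flag w) (rep w).base}

/-- The vertices of the resolution lying over the boundary of `σ`. -/
def OverBdry (σ : Finset V) : Set (Vert A V) :=
  {w | w ∈ Over σ ∧ σ ∉ flag w}

lemma mk_mem_over_iff : mk F v b ∈ Over σ ↔ IsBasedFlag σ F v := by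
  obtain ⟨ζ, hζ, -⟩ := exists_path_rep F v b
  change IsBasedFlag σ (flag (mk F v b)) _ ↔ _
  rw [flag_mk]
  exact ⟨fun h => h.rebase (hζ.mem_iff.2 h.mem_core), fun h => h.rebase (hζ.mem_iff.1 h.mem_core)⟩

lemma mk_mem_overBdry_iff : mk F v b ∈ OverBdry σ ↔ IsBasedFlag σ F v ∧ σ ∉ F := by
  rw [OverBdry, mem_ofPred_eq, mk_mem_over_iff, flag_mk]

lemma flag_ne_singleton (hw : w ∈ Over σ) (hle : w ≤ w') (h : flag w ≠ {τ}) : flag w' ≠ {τ} := by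
  intro h'
  have hsub := flag_mono hle
  rw [h', Finset.subset_singleton_iff] at hsub
  exact hsub.elim hw.nonempty.ne_empty h

variable [DecidableEq V]

/-- Removing `σ` from the flag of a vertex. -/
def down (σ : Finset V) (w : Vert A V) : Vert A V :=
  mk ((flag w).erase σ) (rep w).base (rep w).shift

lemma down_mk : down σ (mk F v b) = mk (F.erase σ) v b := by
  obtain ⟨ζ, hζ, hshift⟩ := exists_path_rep F v b
  rw [down, flag_mk]
  exact mk_eq_mk_of_path (hζ.mono (core_anti (Finset.erase_subset _ _)))
    fun τ hτ => hshift τ (Finset.mem_of_mem_erase hτ)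

lemma down_mem_overBdry (hw : w ∈ Over σ) (h : flag w ≠ {σ}) : down σ w ∈ OverBdry σ := by
  obtain ⟨F, v, b, rfl⟩ := exists_eq_mk w
  rw [mk_mem_over_iff] at hw
  rw [flag_mk] at h
  rw [down_mk, mk_mem_overBdry_iff]
  exact ⟨hw.erase h, Finset.notMem_erase σ F⟩

lemma down_le : down σ w ≤ w := by
  obtain ⟨F, v, b, rfl⟩ := exists_eq_mk w
  rw [down_mk]
  exact mk_mono v b (Finset.erase_subset _ _)

lemma down_mono (h : w ≤ w') : down σ w ≤ down σ w' := by
  obtain ⟨F, F', v, b, hF, rfl, rfl⟩ := exists_common_base h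
  rw [down_mk, down_mk]
  exact mk_mono v b (Finset.erase_subset_erase _ hF)

lemma down_of_notMem (h : σ ∉ flag w) : down σ w = w := by
  obtain ⟨F, v, b, rfl⟩ := exists_eq_mk w
  rw [flag_mk] at h
  rw [down_mk, Finset.erase_eq_of_notMem h]

end Over

section SmallSimplices

variable {A V : Type*} [AddCommGroup A] {F : Finset (Finset V)} {v : V} {b : Finset V → Coeff A V}
  {w w' : Vert A V} {σ : Finset V}

lemma IsBasedFlag.eq_singleton_of_card_lt (hF : IsBasedFlag σ F v) (hσ : σ ∉ F) (hc : σ.card < 3) :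
    F = {{v}} := by
  refine Finset.eq_singleton_iff_nonempty_unique_mem.2 ⟨hF.nonempty, fun τ hτ => ?_⟩
  have hlt : τ ⊂ σ := Finset.ssubset_iff_subset_ne.2
    ⟨hF.subset τ hτ, ne_of_mem_of_not_mem hτ hσ⟩
  have hcard := Finset.card_lt_card hlt
  exact Finset.eq_singleton_iff_unique_mem.2 ⟨hF.mem_core τ hτ, fun x hx =>
    Finset.card_le_one.1 (by omega) x hx v (hF.mem_core τ hτ)⟩

lemma eq_of_le_of_mem_overBdry_of_card_lt (hc : σ.card < 3) (hw : w ∈ OverBdry σ)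
    (hw' : w' ∈ OverBdry σ) (hle : w ≤ w') : w = w' := by
  obtain ⟨F, F', v, b, -, rfl, rfl⟩ := exists_common_base hle
  rw [mk_mem_overBdry_iff] at hw hw'
  rw [hw.1.eq_singleton_of_card_lt hw.2 hc, hw'.1.eq_singleton_of_card_lt hw'.2 hc]

lemma exists_isCocycleOn_over_of_card_lt {B : Type*} [AddCommGroup B]
    {a : Vert A V → Vert A V → B} (hc : σ.card < 3) (ha : IsCocycleOn (OverBdry σ) a) :
    ∃ a', IsCocycleOn (Over σ) a' ∧ ∀ u ∈ OverBdry σ, ∀ w ∈ OverBdry σ, u ≤ w → a' u w = a u w := by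
  refine ⟨fun _ _ => 0, fun _ _ _ _ _ _ _ _ => (add_zero 0).symm, fun u hu w hw huw => ?_⟩
  rw [← eq_of_le_of_mem_overBdry_of_card_lt hc hu hw huw, ha.apply_self hu]

variable [DecidableEq V]

/-- Adding `σ` to the flag of a vertex. -/
def up (σ : Finset V) (w : Vert A V) : Vert A V :=
  mk (insert σ (flag w)) (rep w).base (rep w).shift

lemma up_mk (hF : IsBasedFlag σ F v) (hc : σ.card < 3) :
    up σ (mk F v b) = mk (insert σ F) v b := by
  obtain ⟨ζ, hζ, hshift⟩ := exists_path_rep F v b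
  rw [up, flag_mk]
  have hcore : core F ⊆ core (insert σ F) := fun u hu =>
    (hF.rebase hu).insert_self.mem_core
  refine mk_eq_mk_of_path (hζ.mono hcore) fun τ hτ hτc => ?_
  rcases Finset.mem_insert.1 hτ with rfl | hτF
  · omega
  · exact hshift τ hτF hτc

lemma up_mem_over (hc : σ.card < 3) (hw : w ∈ Over σ) : up σ w ∈ Over σ := by
  obtain ⟨F, v, b, rfl⟩ := exists_eq_mk w
  rw [mk_mem_over_iff] at hw
  rw [up_mk hw hc, mk_mem_over_iff]
  exact hw.insert_self

lemma up_monotoneOn (hc : σ.card < 3) : MonotoneOn (up (A := A) σ) (Over σ) := by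
  intro w hw w' hw' hle
  obtain ⟨F, F', v, b, hF, rfl, rfl⟩ := exists_common_base hle
  rw [mk_mem_over_iff] at hw hw'
  rw [up_mk hw hc, up_mk hw' hc]
  exact mk_mono v b (Finset.insert_subset_insert _ hF)

lemma le_up (hc : σ.card < 3) (hw : w ∈ Over σ) : w ≤ up σ w := by
  obtain ⟨F, v, b, rfl⟩ := exists_eq_mk w
  rw [mk_mem_over_iff] at hw
  rw [up_mk hw hc]
  exact mk_mono v b (Finset.subset_insert _ _)

lemma mk_singleton_le_up (hc : σ.card < 3) (hv : v ∈ σ) (hw : w ∈ Over σ) :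
    mk {σ} v b ≤ up σ w := by
  obtain ⟨F, v', b', rfl⟩ := exists_eq_mk w
  rw [mk_mem_over_iff] at hw
  rw [up_mk hw hc, mk_le_mk_iff]
  refine ⟨by simp, _, .single (mem_core_singleton.2 hw.base_mem) (mem_core_singleton.2 hv), ?_⟩
  intro τ hτ hτc
  rw [Finset.mem_singleton.1 hτ] at hτc
  omega

omit [DecidableEq V] in
lemma exists_isPotentialOn_over_of_card_lt {B : Type*} [AddCommGroup B]
    {a : Vert A V → Vert A V → B} (hc : σ.card < 3) (hσ : σ.Nonempty)
    (ha : IsCocycleOn (Over σ) a) : ∃ H, IsPotentialOn (Over σ) a H := by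
  classical
  obtain ⟨v, hv⟩ := hσ
  exact ha.exists_isPotentialOn_of_cone
    (mk_mem_over_iff.2 (.singleton hv subset_rfl) : mk {σ} v 0 ∈ Over σ)
    (fun _ hw => up_mem_over hc hw) (up_monotoneOn hc) (fun _ hw => le_up hc hw)
    fun _ hw => mk_singleton_le_up hc hv hw

end SmallSimplices

end Resolution

/-! ### Extension over a simplex -/

namespace Resolution

variable {A B V : Type*} [AddCommGroup A] [AddCommGroup B] {F F' : Finset (Finset V)}
  {u v v' : V} {b b' : Finset V → Coeff A V} {w w' : Vert A V} {σ : Finset V}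

lemma singleton_ne_of_three_le_card (hc : 3 ≤ σ.card) (v : V) : {v} ≠ σ := by
  rintro rfl
  simp at hc

variable [DecidableEq V]

lemma pair_ne_of_three_le_card (hc : 3 ≤ σ.card) (u v : V) : {u, v} ≠ σ := by
  rintro rfl
  exact absurd (hc.trans Finset.card_le_two) (by omega)

lemma pair_ne_singleton {τ : Finset V} (hτ : τ ≠ σ) : ({τ, σ} : Finset (Finset V)) ≠ {σ} := by
  simpa [Finset.insert_eq_self] using hτ

section Injectivity

variable {a : Vert A V → Vert A V → B} {h : Vert A V → B}

/-- The extension of a potential `h` of `a` over `∂σ` along the comparisons `down σ w ≤ w`: it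
treats the vertices over `σ` other than the apexes, those with flag `{σ}`, as a mapping cylinder. -/
def cylPot (σ : Finset V) (a : Vert A V → Vert A V → B) (h : Vert A V → B) (w : Vert A V) : B :=
  h (down σ w) + a (down σ w) w

/-- The value at the apex `mk {σ} v b` of the potential extending `h`. -/
def apexPot (σ : Finset V) (a : Vert A V → Vert A V → B) (h : Vert A V → B) (v : V)
    (b : Finset V → Coeff A V) : B :=
  cylPot σ a h (mk {{v}, σ} v b) - a (mk {σ} v b) (mk {{v}, σ} v b)

open Classical in
/-- The potential over `σ` extending a potential `h` over `∂σ`. -/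
def overPot (σ : Finset V) (a : Vert A V → Vert A V → B) (h : Vert A V → B) (w : Vert A V) : B :=
  if flag w = {σ} then apexPot σ a h (rep w).base (rep w).shift else cylPot σ a h w

lemma apexPot_congr (hb : b σ = b' σ) : apexPot σ a h v b = apexPot σ a h v b' := by
  rw [apexPot, apexPot, mk_congr (F := {σ}) v (b' := b'), mk_congr (F := {{v}, σ}) v (b' := b')]
  · intro τ hτ hc
    rcases Finset.mem_insert.1 hτ with rfl | hτ
    · simp at hc
    · rw [Finset.mem_singleton.1 hτ, hb]
  · intro τ hτ _
    rw [Finset.mem_singleton.1 hτ, hb]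

variable (ha : IsCocycleOn (Over σ) a) (hh : IsPotentialOn (OverBdry σ) a h)

include ha hh

lemma isPotentialOn_cylPot : IsPotentialOn {w ∈ Over σ | flag w ≠ {σ}} a (cylPot σ a h) := by
  rintro w ⟨hw, hσ⟩ w' ⟨hw', hσ'⟩ hle
  have hd := down_mem_overBdry hw hσ
  have hd' := down_mem_overBdry hw' hσ'
  have hsquare := ha.add_eq_add hd.1 hd'.1 hw hw' (down_mono hle) down_le down_le hle
  rw [hh _ hd _ hd' (down_mono hle), ← eq_sub_iff_add_eq'] at hsquare
  rw [cylPot, cylPot, hsquare]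
  abel

lemma cylPot_sub_apex_eq_of_subset (hF : IsBasedFlag σ F v) (hF' : IsBasedFlag σ F' v)
    (hFF' : F ⊆ F') (hσ : σ ∈ F) (hne : F ≠ {σ}) :
    cylPot σ a h (mk F v b) - a (mk {σ} v b) (mk F v b) =
      cylPot σ a h (mk F' v b) - a (mk {σ} v b) (mk F' v b) := by
  have hapex : mk {σ} v b ∈ Over σ := mk_mem_over_iff.2 (.singleton hF.base_mem subset_rfl)
  have hmem : mk F v b ∈ Over σ := mk_mem_over_iff.2 hF
  have hmem' : mk F' v b ∈ Over σ := mk_mem_over_iff.2 hF'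
  have hle := mk_mono v b hFF'
  have hflag : flag (mk F v b) ≠ {σ} := by rwa [flag_mk]
  rw [ha _ hapex _ hmem _ hmem' (mk_mono v b (Finset.singleton_subset_iff.2 hσ)) hle,
    isPotentialOn_cylPot ha hh _ ⟨hmem, hflag⟩ _ ⟨hmem', flag_ne_singleton hmem hle hflag⟩ hle]
  abel

-- The flags `F` and `{{v}, σ}` are joined through `insert {v} F` in the link of the apex.
lemma cylPot_sub_apex_eq_apexPot (hF : IsBasedFlag σ F v) (hσ : σ ∈ F) (hne : F ≠ {σ})
    (hc : 3 ≤ σ.card) :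
    cylPot σ a h (mk F v b) - a (mk {σ} v b) (mk F v b) = apexPot σ a h v b := by
  have hbase : IsBasedFlag σ {{v}, σ} v :=
    (IsBasedFlag.singleton hF.base_mem subset_rfl).insert_singleton
  rw [apexPot, cylPot_sub_apex_eq_of_subset ha hh hF hF.insert_singleton
      (Finset.subset_insert _ _) hσ hne,
    cylPot_sub_apex_eq_of_subset ha hh hbase hF.insert_singleton
      (Finset.insert_subset_insert _ (Finset.singleton_subset_iff.2 hσ)) (by simp)
      (pair_ne_singleton (singleton_ne_of_three_le_card hc v))]

lemma apexPot_vadd_edge (hc : 3 ≤ σ.card) (hu : u ∈ σ) (hv : v ∈ σ) (b : Finset V → Coeff A V) :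
    apexPot σ a h v (edge A u v +ᵥ b) = apexPot σ a h u b := by
  have hsub : ({u, v} : Set V) ⊆ core {σ} := by
    simpa [insert_subset_iff, mem_core_singleton] using ⟨hu, hv⟩
  have hF : ∀ x ∈ ({u, v} : Finset V), IsBasedFlag σ {{u, v}, σ} x := fun x hx =>
    (IsBasedFlag.singleton (mem_core_singleton.1 (hsub (by simpa using hx))) subset_rfl)
      |>.insert_of_subset_core hx (by simpa using hsub)
  have hu' := hF u (by simp)
  have hv' := hF v (by simp)
  have hne := pair_ne_singleton (pair_ne_of_three_le_card hc u v)
  rw [← cylPot_sub_apex_eq_apexPot ha hh hu' (by simp) hne hc,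
    ← cylPot_sub_apex_eq_apexPot ha hh hv' (by simp) hne hc,
    mk_vadd b hu'.mem_core hv'.mem_core,
    mk_vadd b (mem_core_singleton.2 hu) (mem_core_singleton.2 hv)]

lemma apexPot_vadd_of_path (hc : 3 ≤ σ.card) {ζ : Coeff A V} (hζ : Path (core {σ}) v v' ζ)
    (b : Finset V → Coeff A V) : apexPot σ a h v' (ζ +ᵥ b) = apexPot σ a h v b := by
  induction hζ with
  | nil => rw [zero_vadd]
  | cons _ hv hw ih =>
    rw [add_vadd, apexPot_vadd_edge ha hh hc (mem_core_singleton.1 hv) (mem_core_singleton.1 hw),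
      ih]

lemma overPot_apex (hc : 3 ≤ σ.card) :
    overPot σ a h (mk {σ} v b) = apexPot σ a h v b := by
  obtain ⟨ζ, hζ, hshift⟩ := exists_path_rep {σ} v b
  rw [overPot, if_pos flag_mk, ← apexPot_vadd_of_path ha hh hc hζ b]
  exact apexPot_congr (hshift σ (Finset.mem_singleton_self σ) hc)

lemma isPotentialOn_overPot (hc : 3 ≤ σ.card) : IsPotentialOn (Over σ) a (overPot σ a h) := by
  intro w hw w' hw' hle
  by_cases hσ : flag w = {σ}
  · by_cases hσ' : flag w' = {σ}
    · rw [← eq_of_le_of_flag_eq hle (hσ.trans hσ'.symm), ha.apply_self hw, sub_self]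
    · obtain ⟨F, F', v, b, hF, rfl, rfl⟩ := exists_common_base hle
      rw [flag_mk] at hσ
      subst hσ
      have hapex := cylPot_sub_apex_eq_apexPot ha hh (b := b) (mk_mem_over_iff.1 hw')
        (Finset.singleton_subset_iff.1 hF) (by rwa [flag_mk] at hσ') hc
      rw [overPot_apex ha hh hc, overPot, if_neg hσ', ← hapex, sub_sub_cancel]
  · have hσ' := flag_ne_singleton hw hle hσ
    rw [overPot, overPot, if_neg hσ, if_neg hσ',
      isPotentialOn_cylPot ha hh w ⟨hw, hσ⟩ w' ⟨hw', hσ'⟩ hle]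

end Injectivity

omit [DecidableEq V] in
lemma exists_isPotentialOn_over {a : Vert A V → Vert A V → B} {h : Vert A V → B}
    (hσ : σ.Nonempty) (ha : IsCocycleOn (Over σ) a) (hh : IsPotentialOn (OverBdry σ) a h) :
    ∃ H, IsPotentialOn (Over σ) a H := by
  classical
  by_cases hc : 3 ≤ σ.card
  · exact ⟨_, isPotentialOn_overPot ha hh hc⟩
  · exact exists_isPotentialOn_over_of_card_lt (not_le.1 hc) hσ ha

section Surjectivity

variable {a : Vert A V → Vert A V → A}

/-- The value at `mk F v b` of the potential of `a` on the star of `mk {{v}} v b`, normalised at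
that vertex. -/
def starPot (a : Vert A V → Vert A V → A) (F : Finset (Finset V)) (v : V)
    (b : Finset V → Coeff A V) : A :=
  conePot a (mk {{v}} v b) (mk F v b) (mk (insert {v} F) v b)

/-- The alternating cochain on `σ` comparing, at an edge, the normalisations of the potentials
`starPot` at its endpoints. -/
def edgeDefect (σ : Finset V) (a : Vert A V → Vert A V → A) : AltCochain A V :=
  ⟨fun u v => if u ∈ σ ∧ v ∈ σ then starPot a {{u, v}} u 0 - starPot a {{u, v}} v 0 else 0, by
    intro u v
    refine ⟨?_, by simp only [sub_self, ite_self]⟩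
    simp only [and_comm (a := u ∈ σ), Finset.pair_comm u v]
    split_ifs <;> simp⟩

/-- The potential of the extended cocycle on the link of an apex: evaluating the shift at the edge
defect absorbs the dependence of `starPot` on the base vertex. -/
def linkPot (σ : Finset V) (a : Vert A V → Vert A V → A) (w : Vert A V) : A :=
  (rep w).shift σ (edgeDefect σ a) + starPot a ((flag w).erase σ) (rep w).base (rep w).shift

open Classical in
/-- The extension over `σ` of a cocycle `a` over `∂σ`: the pullback along `down σ` away from the
apexes, and the potential `linkPot` on the edges issuing from an apex. -/
def overCochain (σ : Finset V) (a : Vert A V → Vert A V → A) (w w' : Vert A V) : A :=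
  if flag w = {σ} then (if flag w' = {σ} then 0 else linkPot σ a w') else a (down σ w) (down σ w')

lemma starPot_congr (hb : ∀ τ ∈ F, 3 ≤ τ.card → b τ = b' τ) :
    starPot a F v b = starPot a F v b' := by
  have hv : ∀ τ ∈ ({{v}} : Finset (Finset V)), 3 ≤ τ.card → b τ = b' τ := by simp
  have hvF : ∀ τ ∈ insert {v} F, 3 ≤ τ.card → b τ = b' τ :=
    Finset.forall_mem_insert _ _ _ |>.2 ⟨by simp, hb⟩
  rw [starPot, starPot, mk_congr v hb, mk_congr v hv, mk_congr v hvF]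

lemma starPot_pair_eq_zero_shift (x : V) :
    starPot a {{u, v}} x b = starPot a {{u, v}} x 0 := by
  refine starPot_congr fun τ hτ hc => ?_
  exact absurd (Finset.mem_singleton.1 hτ).symm (pair_ne_of_three_le_card hc u v)

variable (ha : IsCocycleOn (OverBdry σ) a)

include ha

lemma starPot_sub_starPot (hF' : IsBasedFlag σ F' v) (hFF' : F ⊆ F') (hne : F.Nonempty)
    (hσ : σ ∉ F') (hc : 3 ≤ σ.card) :
    starPot a F' v b - starPot a F v b = a (mk F v b) (mk F' v b) := by
  have hvσ := (singleton_ne_of_three_le_card hc v).symm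
  have hF := hF'.mono hFF' hne
  have hσF : σ ∉ F := fun h => hσ (hFF' h)
  have hv : mk {{v}} v b ∈ OverBdry σ :=
    mk_mem_overBdry_iff.2 ⟨.singleton (by simp) (by simpa using hF.base_mem), by simpa using hvσ⟩
  exact ha.conePot_sub_conePot hv (mk_mem_overBdry_iff.2 ⟨hF, hσF⟩)
    (mk_mem_overBdry_iff.2 ⟨hF.insert_singleton, by simp [hvσ, hσF]⟩)
    (mk_mem_overBdry_iff.2 ⟨hF', hσ⟩)
    (mk_mem_overBdry_iff.2 ⟨hF'.insert_singleton, by simp [hvσ, hσ]⟩)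
    (mk_mono v b (by simp)) (mk_mono v b (Finset.subset_insert _ _))
    (mk_mono v b (Finset.subset_insert _ _)) (mk_mono v b hFF')
    (mk_mono v b (Finset.insert_subset_insert _ hFF'))

lemma starPot_sub_starPot_face (hF : IsBasedFlag σ F v) (hσ : σ ∉ F) (hc : 3 ≤ σ.card)
    {τ : Finset V} (hv : v ∈ τ) (hτ : (τ : Set V) ⊆ core F) (hτσ : τ ≠ σ) :
    starPot a F v b - starPot a {τ} v b =
      a (mk {τ} v b) (mk (insert τ F) v b) - a (mk F v b) (mk (insert τ F) v b) := by
  have hins := hF.insert_of_subset_core hv hτ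
  have hσ' : σ ∉ insert τ F := by simp [hτσ.symm, hσ]
  rw [← starPot_sub_starPot ha hins (by simp) (Finset.singleton_nonempty τ) hσ' hc,
    ← starPot_sub_starPot ha hins (Finset.subset_insert _ _) hF.nonempty hσ' hc]
  abel

lemma starPot_eq_edge_add (hF : IsBasedFlag σ F v) (hu : u ∈ core F) (hσ : σ ∉ F)
    (hc : 3 ≤ σ.card) (b : Finset V → Coeff A V) :
    starPot a F v b = edge A v u (edgeDefect σ a) + starPot a F u (edge A v u +ᵥ b) := by
  have hFu := hF.rebase hu
  have hsub : (({v, u} : Finset V) : Set V) ⊆ core F := by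
    simpa [insert_subset_iff] using ⟨hF.mem_core, hu⟩
  have hτσ := pair_ne_of_three_le_card hc v u
  have hins := hF.insert_of_subset_core (Finset.mem_insert_self v {u}) hsub
  have hinsu := hFu.insert_of_subset_core (τ := {v, u}) (by simp) hsub
  have at_v := starPot_sub_starPot_face ha hF hσ hc (b := b) (by simp) hsub hτσ
  have at_u := starPot_sub_starPot_face ha hFu hσ hc (b := edge A v u +ᵥ b) (by simp) hsub hτσ
  rw [mk_vadd b hF.mem_core hu, mk_vadd b hins.mem_core hinsu.mem_core,
    mk_vadd (F := {{v, u}}) b (by simp [mem_core_singleton]) (by simp [mem_core_singleton]),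
    ← at_v, starPot_pair_eq_zero_shift (b := b), starPot_pair_eq_zero_shift] at at_u
  have hdefect : edge A v u (edgeDefect σ a) =
      starPot a {{v, u}} v 0 - starPot a {{v, u}} u 0 :=
    if_pos ⟨hF.base_mem, hFu.base_mem⟩
  rw [hdefect, ← sub_eq_iff_eq_add, ← sub_eq_sub_iff_sub_eq_sub, at_u]

lemma starPot_eq_add_of_path (hF : IsBasedFlag σ F v) (hσ : σ ∉ F) (hc : 3 ≤ σ.card)
    {ζ : Coeff A V} (hζ : Path (core F) v v' ζ) (b : Finset V → Coeff A V) :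
    starPot a F v b = ζ (edgeDefect σ a) + starPot a F v' (ζ +ᵥ b) := by
  induction hζ with
  | nil => rw [zero_vadd, Pi.zero_apply, zero_add]
  | cons _ hv hw ih =>
    rw [ih, starPot_eq_edge_add ha (hF.rebase hv) hw hσ hc, add_vadd, Pi.add_apply]
    abel

lemma linkPot_mk (hF : IsBasedFlag σ F v) (hσ : σ ∈ F) (hne : F ≠ {σ}) (hc : 3 ≤ σ.card) :
    linkPot σ a (mk F v b) = b σ (edgeDefect σ a) + starPot a (F.erase σ) v b := by
  obtain ⟨ζ, hζ, hshift⟩ := exists_path_rep F v b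
  have hpath := starPot_eq_add_of_path ha (hF.erase hne) (Finset.notMem_erase σ F) hc
    (hζ.mono (core_anti (Finset.erase_subset _ _))) b
  have hcongr : starPot a (F.erase σ) (rep (mk F v b)).base (rep (mk F v b)).shift =
      starPot a (F.erase σ) (rep (mk F v b)).base (ζ +ᵥ b) :=
    starPot_congr fun τ hτ => hshift τ (Finset.mem_of_mem_erase hτ)
  rw [linkPot, flag_mk, hshift σ hσ hc, hpath, hcongr, Pi.add_apply]
  abel

lemma linkPot_eq_add (hw' : w' ∈ Over σ) (hle : w ≤ w') (hσ : σ ∈ flag w) (hne : flag w ≠ {σ})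
    (hc : 3 ≤ σ.card) : linkPot σ a w' = linkPot σ a w + a (down σ w) (down σ w') := by
  obtain ⟨F, F', v, b, hF, rfl, rfl⟩ := exists_common_base hle
  have hflag' := mk_mem_over_iff.1 hw'
  rw [flag_mk] at hσ hne
  have hflag := hflag'.mono hF ⟨σ, hσ⟩
  have hne' : F' ≠ {σ} := by
    simpa only [flag_mk] using
      flag_ne_singleton (mk_mem_over_iff.2 hflag) hle (by rwa [flag_mk])
  have hsub := starPot_sub_starPot ha (b := b) (hflag'.erase hne')
    (Finset.erase_subset_erase σ hF) (hflag.erase_nonempty hne) (Finset.notMem_erase σ F') hc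
  rw [linkPot_mk ha hflag hσ hne hc, linkPot_mk ha hflag' (hF hσ) hne' hc, down_mk, down_mk,
    ← hsub]
  abel

lemma isCocycleOn_overCochain (hc : 3 ≤ σ.card) : IsCocycleOn (Over σ) (overCochain σ a) := by
  intro u hu v hv w hw huv hvw
  by_cases hfu : flag u = {σ}
  · by_cases hfv : flag v = {σ}
    · simp only [overCochain, if_pos hfu, if_pos hfv, zero_add]
    · have hσ : σ ∈ flag v := flag_mono huv (by simp [hfu])
      simp only [overCochain, if_pos hfu, if_neg hfv, if_neg (flag_ne_singleton hv hvw hfv)]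
      exact linkPot_eq_add ha hw hvw hσ hfv hc
  · have hfv := flag_ne_singleton hu huv hfu
    simp only [overCochain, if_neg hfu, if_neg hfv]
    exact ha _ (down_mem_overBdry hu hfu) _ (down_mem_overBdry hv hfv) _
      (down_mem_overBdry hw (flag_ne_singleton hv hvw hfv)) (down_mono huv) (down_mono hvw)

omit ha in
lemma overCochain_of_mem_overBdry (hw : w ∈ OverBdry σ) (hw' : w' ∈ OverBdry σ) :
    overCochain σ a w w' = a w w' := by
  have hσ : flag w ≠ {σ} := fun h => hw.2 (by simp [h])
  rw [overCochain, if_neg hσ, down_of_notMem hw.2, down_of_notMem hw'.2]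

end Surjectivity

omit [DecidableEq V] in
lemma exists_isCocycleOn_over {a : Vert A V → Vert A V → A} (ha : IsCocycleOn (OverBdry σ) a) :
    ∃ a', IsCocycleOn (Over σ) a' ∧ ∀ u ∈ OverBdry σ, ∀ w ∈ OverBdry σ, u ≤ w → a' u w = a u w := by
  classical
  by_cases hc : 3 ≤ σ.card
  · exact ⟨_, isCocycleOn_overCochain ha hc, fun u hu w hw _ => overCochain_of_mem_overBdry hu hw⟩
  · exact exists_isCocycleOn_over_of_card_lt (not_le.1 hc) ha

end Resolution

/-! ### Barycentric coordinates -/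

lemma exists_isGreatest_of_isChain {P : Type*} [PartialOrder P] {s : Set P} (hs : s.Finite)
    (hne : s.Nonempty) (hc : IsChain (· ≤ ·) s) : ∃ m, IsGreatest s m := by
  obtain ⟨m, hm⟩ := hs.exists_maximal hne
  exact ⟨m, hm.prop, fun w hw => (hc.total hw hm.prop).elim id fun h => hm.2 hw h⟩

section FlagWeight

variable {α : Type*} {t : Finset α → ℝ} {y : α → ℝ} {M : Finset α} {c m : ℝ}

/-- Nonnegative weights on the nonempty subsets of `α` whose support is a chain; these are the
(homogeneous) barycentric coordinates on the barycentric subdivision. -/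
structure IsFlagWeight (t : Finset α → ℝ) : Prop where
  nonneg : ∀ σ, 0 ≤ t σ
  empty : t ∅ = 0
  chain : IsChain (· ⊆ ·) {σ | t σ ≠ 0}

lemma IsFlagWeight.nonempty (h : IsFlagWeight t) {σ : Finset α} (hσ : t σ ≠ 0) : σ.Nonempty :=
  Finset.nonempty_iff_ne_empty.2 fun he => hσ (he ▸ h.empty)

lemma IsFlagWeight.exists_isGreatest [Finite α] (h : IsFlagWeight t) (hne : t ≠ 0) :
    ∃ M, IsGreatest {σ | t σ ≠ 0} M :=
  exists_isGreatest_of_isChain (toFinite _) (ne_iff.1 hne) h.chain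

lemma IsFlagWeight.update [DecidableEq α] (h : IsFlagWeight t) (hM : M.Nonempty) (hc : 0 ≤ c)
    (hsub : ∀ σ, t σ ≠ 0 → σ ⊆ M) : IsFlagWeight (update t M c) where
  nonneg σ := by
    rcases eq_or_ne σ M with rfl | hσ
    · rwa [update_self]
    · rw [update_of_ne hσ]
      exact h.nonneg σ
  empty := by rw [update_of_ne hM.ne_empty.symm, h.empty]
  chain := by
    refine (h.chain.insert (a := M) fun σ hσ _ => .inr (hsub σ hσ)).mono fun σ hσ => ?_
    rcases eq_or_ne σ M with rfl | hσM
    · exact .inl rfl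
    · exact .inr (by simpa [hσM] using hσ)

lemma IsFlagWeight.exists_mem_forall_eq (h : IsFlagWeight t) (hM : M.Nonempty)
    (hsub : ∀ σ, t σ ≠ 0 → σ ⊆ M) : ∃ v ∈ M, ∀ σ, t σ ≠ 0 → v ∈ σ → σ = M := by
  by_contra! hcover
  obtain ⟨v, hv⟩ := hM
  have hchain : IsChain (fun σ τ : Finset α => (σ : Set α) ⊆ τ) {σ | t σ ≠ 0 ∧ σ ≠ M} :=
    (h.chain.mono fun σ hσ => hσ.1).mono_rel fun _ _ => Finset.coe_subset.2
  have hne : {σ | t σ ≠ 0 ∧ σ ≠ M}.Nonempty :=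
    let ⟨σ, hσ, _, hσM⟩ := hcover v hv
    ⟨σ, hσ, hσM⟩
  have hunion : (M : Set α) ⊆ ⋃ σ ∈ {σ | t σ ≠ 0 ∧ σ ≠ M}, (σ : Set α) := fun v hv =>
    let ⟨σ, hσ, hvσ, hσM⟩ := hcover v hv
    mem_biUnion (x := σ) ⟨hσ, hσM⟩ hvσ
  obtain ⟨σ, ⟨hσ, hσM⟩, hMσ⟩ :=
    hchain.directedOn.exists_mem_subset_of_finset_subset_biUnion hne hunion
  exact hσM ((hsub σ hσ).antisymm (Finset.coe_subset.1 hMσ))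

variable [Fintype α] [DecidableEq α]

/-- The identification of the barycentric subdivision with the original simplex: it sends the
barycenter of each `σ` to the average of the vertices of `σ`. -/
def flagPush (t : Finset α → ℝ) (v : α) : ℝ :=
  ∑ σ, if v ∈ σ then t σ / σ.card else 0

lemma flagPush_zero : flagPush (0 : Finset α → ℝ) = 0 := by
  ext v
  simp [flagPush]

lemma continuous_flagPush : Continuous (flagPush : (Finset α → ℝ) → α → ℝ) := by
  refine continuous_pi fun v => continuous_finsetSum _ fun σ _ => ?_
  split_ifs <;> fun_prop

lemma sum_flagPush (h : t ∅ = 0) : ∑ v, flagPush t v = ∑ σ, t σ := by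
  simp only [flagPush]
  rw [Finset.sum_comm]
  refine Finset.sum_congr rfl fun σ _ => ?_
  rw [← Finset.sum_filter, Finset.sum_const, Finset.filter_univ_mem, nsmul_eq_mul]
  rcases σ.eq_empty_or_nonempty with rfl | hne
  · simp [h]
  · exact mul_div_cancel₀ _ (Nat.cast_ne_zero.2 hne.card_ne_zero)

lemma flagPush_update (t : Finset α → ℝ) (M : Finset α) (c : ℝ) (v : α) :
    flagPush (update t M c) v = flagPush t v + if v ∈ M then (c - t M) / M.card else 0 := by
  rw [← sub_eq_iff_eq_add', flagPush, flagPush, ← Finset.sum_sub_distrib,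
    Finset.sum_eq_single M]
  · split_ifs <;> simp [sub_div]
  · intro σ _ hσ
    simp [hσ]
  · simp

lemma flagPush_eq_div_card {v : α} (hv : v ∈ M) (huniq : ∀ σ, t σ ≠ 0 → v ∈ σ → σ = M) :
    flagPush t v = t M / M.card := by
  rw [flagPush, Finset.sum_eq_single M, if_pos hv]
  · intro σ _ hσ
    rw [ite_eq_right_iff]
    intro hvσ
    rw [not_imp_comm.1 (huniq σ) fun h => hσ (h hvσ), zero_div]
  · simp

section Nonneg

variable (ht : ∀ σ, 0 ≤ t σ) {v : α} {σ : Finset α}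

include ht

omit [Fintype α] in
lemma flagPush_summand_nonneg (v : α) (σ : Finset α) :
    0 ≤ if v ∈ σ then t σ / σ.card else 0 := by
  have := ht σ
  positivity

lemma flagPush_nonneg (v : α) : 0 ≤ flagPush t v :=
  Finset.sum_nonneg fun σ _ => flagPush_summand_nonneg ht v σ

lemma div_card_le_flagPush (hv : v ∈ σ) : t σ / σ.card ≤ flagPush t v := by
  simpa only [if_pos hv, flagPush] using Finset.single_le_sum
    (fun σ _ => flagPush_summand_nonneg ht v σ) (Finset.mem_univ σ)

lemma flagPush_ne_zero_iff : flagPush t v ≠ 0 ↔ ∃ σ, v ∈ σ ∧ t σ ≠ 0 := by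
  rw [flagPush, Ne, Finset.sum_eq_zero_iff_of_nonneg fun σ _ => flagPush_summand_nonneg ht v σ]
  simp only [Finset.mem_univ, true_implies, ite_eq_right_iff, not_forall, exists_prop,
    div_eq_zero_iff, Nat.cast_eq_zero, Finset.card_eq_zero, not_or]
  exact exists_congr fun σ => and_congr_right fun hv => and_iff_left (Finset.ne_empty_of_mem hv)

end Nonneg

/-- The support of a weight on a finite set. -/
def weightSupport (y : α → ℝ) : Finset α :=
  {v | y v ≠ 0}

omit [DecidableEq α] in
lemma mem_weightSupport {v : α} : v ∈ weightSupport y ↔ y v ≠ 0 := by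
  simp [weightSupport]

lemma IsFlagWeight.subset_weightSupport (h : IsFlagWeight t) {σ : Finset α} (hσ : t σ ≠ 0) :
    σ ⊆ weightSupport (flagPush t) :=
  fun _ hv => mem_weightSupport.2 ((flagPush_ne_zero_iff h.nonneg).2 ⟨σ, hv, hσ⟩)

lemma IsFlagWeight.isLeast_div_card (h : IsFlagWeight t) (hM : M.Nonempty)
    (hsub : ∀ σ, t σ ≠ 0 → σ ⊆ M) : IsLeast (flagPush t '' M) (t M / M.card) := by
  obtain ⟨v, hv, huniq⟩ := h.exists_mem_forall_eq hM hsub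
  exact ⟨⟨v, hv, flagPush_eq_div_card hv huniq⟩,
    forall_mem_image.2 fun w hw => div_card_le_flagPush h.nonneg hw⟩

/-- Lowering the nonzero coordinates of `y` by `m`. When `m` is the least of them, this removes
the barycenter of the support of `y` from the decomposition of `y` into barycenters. -/
def peel (y : α → ℝ) (m : ℝ) (v : α) : ℝ :=
  y v - if v ∈ weightSupport y then m else 0

lemma existsUnique_flagPush_eq_of_weightSupport_eq_empty (hy : weightSupport y = ∅) :
    ∃! t, IsFlagWeight t ∧ flagPush t = y := by
  obtain rfl : y = 0 := by
    ext v
    simpa [hy] using (mem_weightSupport (y := y) (v := v)).not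
  refine ⟨0, ⟨⟨fun _ => le_rfl, rfl, fun σ hσ => absurd rfl hσ⟩, flagPush_zero⟩, ?_⟩
  rintro t ⟨ht, h0⟩
  ext σ
  by_contra hσ
  obtain ⟨v, hv⟩ := ht.nonempty hσ
  exact (flagPush_ne_zero_iff ht.nonneg).2 ⟨σ, hv, hσ⟩ (congrFun h0 v)

section Peel

variable (hm : IsLeast (y '' weightSupport y) m)

include hm

omit [DecidableEq α] in
lemma weightSupport_nonempty : (weightSupport y).Nonempty := by
  obtain ⟨v, hv, -⟩ := hm.1
  exact ⟨v, hv⟩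

lemma peel_nonneg (hy : ∀ v, 0 ≤ y v) (v : α) : 0 ≤ peel y m v := by
  rw [peel]
  split_ifs with hv
  · exact sub_nonneg.2 (hm.2 (mem_image_of_mem y hv))
  · simpa using hy v

lemma weightSupport_peel_ssubset : weightSupport (peel y m) ⊂ weightSupport y := by
  obtain ⟨v, hv, hvm⟩ := hm.1
  refine (Finset.ssubset_iff_of_subset fun w hw => ?_).2
    ⟨v, hv, by rw [mem_weightSupport, not_not, peel, if_pos (Finset.mem_coe.1 hv), hvm, sub_self]⟩
  contrapose! hw
  have hyw : y w = 0 := by simpa [mem_weightSupport] using hw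
  simp [mem_weightSupport, peel, hyw]

lemma IsFlagWeight.apply_weightSupport (ht : IsFlagWeight t) (hpush : flagPush t = y) :
    t (weightSupport y) = m * (weightSupport y).card := by
  have hleast := ht.isLeast_div_card (weightSupport_nonempty hm)
    fun σ hσ => hpush ▸ ht.subset_weightSupport hσ
  rw [hpush] at hleast
  rw [hm.unique hleast, div_mul_cancel₀]
  exact Nat.cast_ne_zero.2 (weightSupport_nonempty hm).card_ne_zero

lemma IsFlagWeight.update_weightSupport_zero (ht : IsFlagWeight t) (hpush : flagPush t = y) :
    IsFlagWeight (Function.update t (weightSupport y) 0) ∧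
      flagPush (Function.update t (weightSupport y) 0) = peel y m := by
  have hne := weightSupport_nonempty hm
  refine ⟨ht.update hne le_rfl fun σ hσ => hpush ▸ ht.subset_weightSupport hσ, ?_⟩
  ext v
  rw [flagPush_update, ht.apply_weightSupport hm hpush, hpush, peel, zero_sub, neg_div,
    mul_div_cancel_right₀ _ (Nat.cast_ne_zero.2 hne.card_ne_zero), sub_eq_add_neg]
  split_ifs <;> simp

lemma IsFlagWeight.update_weightSupport (ht : IsFlagWeight t) (hpush : flagPush t = peel y m)
    (hm0 : 0 ≤ m) :
    IsFlagWeight (Function.update t (weightSupport y) (m * (weightSupport y).card)) ∧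
      flagPush (Function.update t (weightSupport y) (m * (weightSupport y).card)) = y := by
  have hne := weightSupport_nonempty hm
  have hssub : ∀ σ, t σ ≠ 0 → σ ⊂ weightSupport y := fun σ hσ =>
    (hpush ▸ ht.subset_weightSupport hσ).trans_ssubset (weightSupport_peel_ssubset hm)
  refine ⟨ht.update hne (by positivity) fun σ hσ => (hssub σ hσ).subset, ?_⟩
  have hzero : t (weightSupport y) = 0 := not_not.1 fun h => (hssub _ h).ne rfl
  ext v
  rw [flagPush_update, hzero, hpush, peel, sub_zero,
    mul_div_cancel_right₀ _ (Nat.cast_ne_zero.2 hne.card_ne_zero), sub_add_cancel]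

lemma existsUnique_flagPush_eq_of_peel (hm0 : 0 ≤ m)
    (h : ∃! t, IsFlagWeight t ∧ flagPush t = peel y m) :
    ∃! t, IsFlagWeight t ∧ flagPush t = y := by
  obtain ⟨t, ⟨ht, hpush⟩, huniq⟩ := h
  refine ⟨_, ht.update_weightSupport hm hpush hm0, ?_⟩
  rintro t' ⟨ht', hpush'⟩
  rw [← huniq _ (ht'.update_weightSupport_zero hm hpush'), update_idem,
    ← ht'.apply_weightSupport hm hpush', update_eq_self]

end Peel

theorem existsUnique_flagPush_eq (hy : ∀ v, 0 ≤ y v) :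
    ∃! t, IsFlagWeight t ∧ flagPush t = y := by
  induction hS : weightSupport y using Finset.strongInduction generalizing y with
  | H S ih =>
    subst hS
    rcases (weightSupport y).eq_empty_or_nonempty with he | hne
    · exact existsUnique_flagPush_eq_of_weightSupport_eq_empty he
    · obtain ⟨v, hv, hmin⟩ := (weightSupport y).exists_min_image y hne
      have hm : IsLeast (y '' weightSupport y) (y v) :=
        ⟨mem_image_of_mem y hv, forall_mem_image.2 hmin⟩
      exact existsUnique_flagPush_eq_of_peel hm (hy v)
        (ih _ (weightSupport_peel_ssubset hm) (peel_nonneg hm hy) rfl)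

end FlagWeight

/-! ### Order complexes -/

section OrderComplex

variable {P : Type*} [PartialOrder P] [Fintype P] [DecidableEq P] {S T : Set P}

open scoped Classical in
/-- The order complex of a subset of a finite poset: its simplices are the nonempty chains. -/
def orderComplex (S : Set P) : FinSimpComplex P where
  faces := {s | s.Nonempty ∧ (∀ w ∈ s, w ∈ S) ∧ IsChain (· ≤ ·) (s : Set P)}
  nonempty_of_mem s hs := (Finset.mem_filter_univ s).1 hs |>.1
  down_closed s hs t hts hne := by
    rw [Finset.mem_filter_univ] at hs ⊢
    exact ⟨hne, fun w hw => hs.2.1 w (hts hw), hs.2.2.mono (Finset.coe_subset.2 hts)⟩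

lemma mem_orderComplex {s : Finset P} : s ∈ (orderComplex S).faces ↔
    s.Nonempty ∧ (∀ w ∈ s, w ∈ S) ∧ IsChain (· ≤ ·) (s : Set P) := by
  simp [orderComplex]

lemma orderComplex_mono (h : S ⊆ T) : (orderComplex S).faces ⊆ (orderComplex T).faces := by
  intro s hs
  rw [mem_orderComplex] at hs ⊢
  exact ⟨hs.1, fun w hw => h (hs.2.1 w hw), hs.2.2⟩

lemma image_mem_orderComplex {f : P → P} (hf : Monotone f) (hS : MapsTo f S S) {s : Finset P}
    (hs : s ∈ (orderComplex S).faces) : s.image f ∈ (orderComplex S).faces := by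
  rw [mem_orderComplex] at hs ⊢
  refine ⟨hs.1.image f, Finset.forall_mem_image.2 fun w hw => hS (hs.2.1 w hw), ?_⟩
  rw [Finset.coe_image]
  exact hf.isChain_image hs.2.2

lemma mem_orderComplex_space_iff {x : P → ℝ} : x ∈ (orderComplex S).space ↔
    (∀ w, 0 ≤ x w) ∧ ∑ w, x w = 1 ∧ (∀ w, x w ≠ 0 → w ∈ S) ∧
      IsChain (· ≤ ·) {w | x w ≠ 0} := by
  refine and_congr_right fun _ => and_congr_right fun hsum => ⟨?_, ?_⟩
  · rintro ⟨s, hs, hx⟩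
    rw [mem_orderComplex] at hs
    exact ⟨fun w hw => hs.2.1 w (hx w hw), hs.2.2.mono fun w hw => hx w hw⟩
  · rintro ⟨hsub, hchain⟩
    obtain ⟨w, -, hw⟩ := Finset.exists_ne_zero_of_sum_ne_zero (hsum.trans_ne one_ne_zero)
    exact ⟨({w | x w ≠ 0} : Finset P), mem_orderComplex.2
      ⟨⟨w, by simpa using hw⟩, by simpa using hsub, by simpa using hchain⟩, by simp⟩

lemma mem_orderComplex_space_iff_of_mem {x : P → ℝ} (hx : x ∈ (orderComplex T).space) :
    x ∈ (orderComplex S).space ↔ ∀ w, x w ≠ 0 → w ∈ S := by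
  obtain ⟨hnonneg, hsum, -, hchain⟩ := mem_orderComplex_space_iff.1 hx
  simp only [mem_orderComplex_space_iff, hnonneg, hsum, hchain, implies_true, true_and, and_true]

lemma exists_isGreatest_support {x : P → ℝ} (hx : x ∈ (orderComplex S).space) :
    ∃ m, IsGreatest {w | x w ≠ 0} m := by
  obtain ⟨-, hsum, -, hchain⟩ := mem_orderComplex_space_iff.1 hx
  obtain ⟨w, -, hw⟩ := Finset.exists_ne_zero_of_sum_ne_zero (hsum.trans_ne one_ne_zero)
  exact exists_isGreatest_of_isChain (toFinite _) ⟨w, hw⟩ hchain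

lemma pair_mem_orderComplex {u w : P} : {u, w} ∈ (orderComplex S).faces ↔
    u ∈ S ∧ w ∈ S ∧ (u ≤ w ∨ w ≤ u) := by
  rw [mem_orderComplex, Finset.coe_pair]
  constructor
  · rintro ⟨-, hS, hchain⟩
    exact ⟨hS u (by simp), hS w (by simp), hchain.total (by simp) (by simp)⟩
  · rintro ⟨hu, hw, h⟩
    refine ⟨by simp, by simp [hu, hw], h.elim IsChain.pair fun h => ?_⟩
    rw [Set.pair_comm]
    exact IsChain.pair h

open FinSimpComplex

variable {A : Type*} [AddCommGroup A] {a : P → P → A}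

lemma isCocycleOn_of_isSimplicialCocycle (ha : (orderComplex S).IsSimplicialCocycle a) :
    IsCocycleOn S a := by
  intro u hu v hv w hw huv hvw
  refine ha u v w (mem_orderComplex.2 ⟨by simp, by simp [hu, hv, hw], ?_⟩)
  rw [Finset.coe_insert, Finset.coe_pair]
  refine (IsChain.pair hvw).insert fun x hx _ => .inl ?_
  rcases hx with rfl | rfl
  exacts [huv, huv.trans hvw]

omit [PartialOrder P] in
lemma FinSimpComplex.IsSimplicialCocycle.antisymm {L : FinSimpComplex P}
    (ha : L.IsSimplicialCocycle a) {u w : P} (h : {u, w} ∈ L.faces) : a u w = -a w u := by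
  have huw : ({u, w, u} : Finset P) = {u, w} := by grind
  have hself := ha.apply_self (face_of_subset h (by simp) (Finset.singleton_nonempty u))
  rw [ha u w u (huw ▸ h)] at hself
  exact eq_neg_of_add_eq_zero_left hself

open scoped Classical in
/-- The alternating extension of a function on the pairs `u ≤ w`. -/
def altExt (a : P → P → A) (u w : P) : A :=
  if u ≤ w then a u w else -a w u

omit [Fintype P] [DecidableEq P] in
lemma altExt_of_le {u w : P} (h : u ≤ w) : altExt a u w = a u w :=
  if_pos h

omit [Fintype P] [DecidableEq P] in
lemma IsCocycleOn.altExt_of_ge (ha : IsCocycleOn S a) {u w : P} (hu : u ∈ S) (h : w ≤ u) :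
    altExt a u w = -a w u := by
  by_cases h' : u ≤ w
  · rw [le_antisymm h h', altExt_of_le le_rfl, ha.apply_self hu, neg_zero]
  · exact if_neg h'

lemma IsCocycleOn.isSimplicialCocycle_altExt (ha : IsCocycleOn S a) :
    (orderComplex S).IsSimplicialCocycle (altExt a) := by
  intro u v w h
  obtain ⟨-, hS, hc⟩ := mem_orderComplex.1 h
  have hu : u ∈ S := hS u (by simp)
  have hv : v ∈ S := hS v (by simp)
  have hw : w ∈ S := hS w (by simp)
  have huv := hc.total (x := u) (y := v) (by simp) (by simp)
  have hvw := hc.total (x := v) (y := w) (by simp) (by simp)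
  have huw := hc.total (x := u) (y := w) (by simp) (by simp)
  have hle : ∀ {x y}, x ≤ y → altExt a x y = a x y := altExt_of_le
  have hge : ∀ {x y}, x ∈ S → y ≤ x → altExt a x y = -a y x := ha.altExt_of_ge
  rcases huv with huv | huv <;> rcases hvw with hvw | hvw <;> rcases huw with huw | huw
  all_goals grind [IsCocycleOn]

lemma bijective_ASHmap_one_orderComplex [Nonempty P] (hST : S ⊆ T)
    (hpot : ∀ a : P → P → A, IsCocycleOn T a → ∀ h, IsPotentialOn S a h → ∃ H, IsPotentialOn T a H)
    (hext : ∀ a : P → P → A, IsCocycleOn S a →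
      ∃ a', IsCocycleOn T a' ∧ ∀ u ∈ S, ∀ w ∈ S, u ≤ w → a' u w = a u w) :
    Bijective (AS.ASHmap A (continuous_inclusion (space_mono (orderComplex_mono hST))) 1) := by
  refine ⟨injective_ASHmap_one_inclusion (orderComplex_mono hST) fun a ha h hh => ?_,
    surjective_ASHmap_one_inclusion (orderComplex_mono hST) fun a ha => ?_⟩
  · obtain ⟨H, hH⟩ := hpot a (isCocycleOn_of_isSimplicialCocycle ha) h
      fun u hu w hw huw => hh u w (pair_mem_orderComplex.2 ⟨hu, hw, .inl huw⟩)
    refine ⟨H, fun u w huw => ?_⟩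
    obtain ⟨hu, hw, hle | hge⟩ := pair_mem_orderComplex.1 huw
    · exact hH u hu w hw hle
    · rw [ha.antisymm huw, hH w hw u hu hge, neg_sub]
  · obtain ⟨a', ha', heq⟩ := hext a (isCocycleOn_of_isSimplicialCocycle ha)
    refine ⟨altExt a', ha'.isSimplicialCocycle_altExt, fun u w huw => ?_⟩
    obtain ⟨hu, hw, hle | hge⟩ := pair_mem_orderComplex.1 huw
    · rw [altExt_of_le hle, heq u hu w hw hle]
    · rw [ha'.altExt_of_ge (hST hu) hge, heq w hw u hu hge, ha.antisymm huw]

end OrderComplex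

/-- The preimage of a subcomplex under a map out of a simplicial complex, when this preimage is
itself a subcomplex. -/
def FinSimpComplex.preimageHomeomorph {W X : Type*} [Fintype W] [DecidableEq W]
    {L K : FinSimpComplex W} (hL : L.faces ⊆ K.faces) {f : K.space → X} {B : Set X}
    (h : ∀ x, f x ∈ B ↔ x.1 ∈ L.space) : f ⁻¹' B ≃ₜ L.space where
  toFun x := ⟨x.1.1, (h x.1).1 x.2⟩
  invFun x := ⟨⟨x.1, space_mono hL x.2⟩, (h _).2 x.2⟩
  left_inv _ := rfl
  right_inv _ := rfl
  continuous_toFun := by fun_prop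
  continuous_invFun := by fun_prop

/-! ### The orbit map -/

namespace Resolution

section Translation

variable {A V : Type*} [AddCommGroup A] {F : Finset (Finset V)} {v : V}
  {b : Finset V → Coeff A V} {w w' : Vert A V} {σ : Finset V} {s : Finset (Finset V) → ℝ}

instance : VAdd (Finset V → Coeff A V) (Vert A V) where
  vadd g w := mk (flag w) (rep w).base (g + (rep w).shift)

lemma vadd_eq_mk_rep (g : Finset V → Coeff A V) (w : Vert A V) :
    g +ᵥ w = mk (flag w) (rep w).base (g + (rep w).shift) :=
  rfl

lemma vadd_mk (g : Finset V → Coeff A V) (F : Finset (Finset V)) (v : V)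
    (b : Finset V → Coeff A V) : g +ᵥ mk F v b = mk F v (g + b) := by
  obtain ⟨ζ, hζ, hshift⟩ := exists_path_rep F v b
  rw [vadd_eq_mk_rep, flag_mk, eq_comm]
  refine mk_eq_mk_of_path hζ.symm fun τ hτ hc => ?_
  rw [Pi.add_apply, Pi.add_apply, hshift τ hτ hc]
  abel

instance : AddAction (Finset V → Coeff A V) (Vert A V) where
  zero_vadd w := by
    obtain ⟨F, v, b, rfl⟩ := exists_eq_mk w
    rw [vadd_mk, zero_add]
  add_vadd g g' w := by
    obtain ⟨F, v, b, rfl⟩ := exists_eq_mk w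
    simp only [vadd_mk, add_assoc]

lemma flag_vadd (g : Finset V → Coeff A V) (w : Vert A V) : flag (g +ᵥ w) = flag w :=
  flag_mk

lemma monotone_vadd (g : Finset V → Coeff A V) : Monotone fun w : Vert A V => g +ᵥ w := by
  intro w w' h
  obtain ⟨F, F', v, b, hF, rfl, rfl⟩ := exists_common_base h
  simp only [vadd_mk]
  exact mk_mono v _ hF

lemma vadd_mem_over (g : Finset V → Coeff A V) (h : w ∈ Over σ) : g +ᵥ w ∈ Over σ := by
  obtain ⟨F, v, b, rfl⟩ := exists_eq_mk w
  rw [vadd_mk]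
  exact mk_mem_over_iff.2 (mk_mem_over_iff.1 h)

lemma overBdry_subset_over : (OverBdry σ : Set (Vert A V)) ⊆ Over σ :=
  fun _ hw => hw.1

lemma exists_isBasedFlag (hne : F.Nonempty) (hchain : IsChain (· ⊆ ·) (F : Set (Finset V)))
    (hmem : ∀ τ ∈ F, τ.Nonempty) (hsub : ∀ τ ∈ F, τ ⊆ σ) : ∃ v, IsBasedFlag σ F v := by
  obtain ⟨τ, hτ, hmin⟩ := F.exists_minimal hne
  obtain ⟨v, hv⟩ := hmem τ hτ
  exact ⟨v, hne, hchain, fun τ' hτ' => (hchain.total hτ hτ').elim id (fun h => hmin hτ' h) hv, hsub⟩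

instance : DecidableEq (Vert A V) :=
  Classical.decEq _

/-- The point with flag weights `s`, all of whose vertices have base vertex `v` and shift `b`. -/
def liftPt (s : Finset (Finset V) → ℝ) (v : V) (b : Finset V → Coeff A V) (w : Vert A V) : ℝ :=
  if w = mk (flag w) v b then s (flag w) else 0

lemma liftPt_mk (s : Finset (Finset V) → ℝ) (F : Finset (Finset V)) (v : V)
    (b : Finset V → Coeff A V) : liftPt s v b (mk F v b) = s F := by
  simp [liftPt, flag_mk]

lemma liftPt_ne_zero_iff : liftPt s v b w ≠ 0 ↔ w = mk (flag w) v b ∧ s (flag w) ≠ 0 := by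
  simp [liftPt]

lemma liftPt_neg_vadd (s : Finset (Finset V) → ℝ) (v : V) (b g : Finset V → Coeff A V)
    (w : Vert A V) : liftPt s v b (-g +ᵥ w) = liftPt s v (g + b) w := by
  simp only [liftPt, flag_vadd, neg_vadd_eq_iff, vadd_mk]

end Translation

instance {A V : Type*} [AddCommGroup A] [Finite A] [Finite V] : Finite (Vert A V) := by
  have : Finite (Rep A V) := Finite.of_injective
    (fun x : Rep A V => (x.flag, x.base, x.shift)) fun ⟨_, _, _⟩ ⟨_, _, _⟩ h => by simpa using h
  exact Quotient.finite _

instance {A V : Type*} [AddCommGroup A] [Finite A] [Finite V] : Fintype (Vert A V) :=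
  Fintype.ofFinite _

section OrbitMap

variable {A V : Type*} [AddCommGroup A] [Fintype V] [DecidableEq V] {K : FinSimpComplex V}
  {x y : Vert A V → ℝ} {F : Finset (Finset V)} {v : V} {b : Finset V → Coeff A V} {w : Vert A V}
  {σ : Finset V} {s : Finset (Finset V) → ℝ}

variable (A K) in
/-- The vertices of the resolution of `K`: those lying over a simplex of `K`. -/
def vertices : Set (Vert A V) :=
  {w | ∃ σ ∈ K.faces, w ∈ Over σ}

lemma over_subset_vertices (hσ : σ ∈ K.faces) : Over σ ⊆ vertices A K :=
  fun _ hw => ⟨σ, hσ, hw⟩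

lemma mapsTo_vadd_vertices (g : Finset V → Coeff A V) :
    MapsTo (fun w => g +ᵥ w) (vertices A K) (vertices A K) :=
  fun _ ⟨σ, hσ, hw⟩ => ⟨σ, hσ, vadd_mem_over g hw⟩

variable [Finite A]

variable (A K) in
/-- The complex `L̂` resolving `K`: the order complex of the poset of its vertices. -/
def resolution : FinSimpComplex (Vert A V) :=
  orderComplex (vertices A K)

lemma image_vadd_mem_resolution (g : Finset V → Coeff A V) {s : Finset (Vert A V)}
    (hs : s ∈ (resolution A K).faces) :
    s.image (AddAction.toPerm g) ∈ (resolution A K).faces :=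
  image_mem_orderComplex (monotone_vadd g) (mapsTo_vadd_vertices g) hs

/-- The sum of the barycentric coordinates of `x` at the vertices with flag `F`. -/
def flagSum (x : Vert A V → ℝ) (F : Finset (Finset V)) : ℝ :=
  ∑ w with flag w = F, x w

lemma flagSum_nonneg (hx : ∀ w, 0 ≤ x w) (F : Finset (Finset V)) : 0 ≤ flagSum x F :=
  Finset.sum_nonneg fun w _ => hx w

lemma flagSum_ne_zero_iff (hx : ∀ w, 0 ≤ x w) :
    flagSum x F ≠ 0 ↔ ∃ w, x w ≠ 0 ∧ flag w = F := by
  rw [flagSum, Ne, Finset.sum_eq_zero_iff_of_nonneg fun w _ => hx w]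
  simp only [Finset.mem_filter_univ, not_forall, exists_prop, and_comm]

lemma sum_flagSum (x : Vert A V → ℝ) : ∑ F, flagSum x F = ∑ w, x w :=
  Finset.sum_fiberwise _ _ _

lemma continuous_flagSum : Continuous (flagSum : (Vert A V → ℝ) → Finset (Finset V) → ℝ) :=
  continuous_pi fun _ => continuous_finsetSum _ fun w _ => continuous_apply w

lemma flagSum_comp_vadd (g : Finset V → Coeff A V) :
    flagSum (fun w => x (g +ᵥ w)) = flagSum x := by
  ext F
  refine Finset.sum_equiv (AddAction.toPerm g) (fun w => ?_) fun w _ => rfl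
  simp only [Finset.mem_filter_univ, AddAction.toPerm_apply, flag_vadd]

lemma isGreatest_flagSum_support (hx : ∀ w, 0 ≤ x w) (h : IsGreatest {w | x w ≠ 0} w) :
    IsGreatest {F | flagSum x F ≠ 0} (flag w) := by
  refine ⟨(flagSum_ne_zero_iff hx).2 ⟨w, h.1, rfl⟩, fun F hF => ?_⟩
  obtain ⟨w', hw', rfl⟩ := (flagSum_ne_zero_iff hx).1 hF
  exact flag_mono (h.2 hw')

lemma exists_isGreatest_mk (hx : x ∈ (resolution A K).space) :
    ∃ σ ∈ K.faces, ∃ F v b, IsBasedFlag σ F v ∧ IsGreatest {w | x w ≠ 0} (mk F v b) := by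
  obtain ⟨w, hw⟩ := exists_isGreatest_support hx
  obtain ⟨σ, hσ, hwσ⟩ := (mem_orderComplex_space_iff.1 hx).2.2.1 w hw.1
  obtain ⟨F, v, b, rfl⟩ := exists_eq_mk w
  exact ⟨σ, hσ, F, v, b, mk_mem_over_iff.1 hwσ, hw⟩

lemma isFlagWeight_flagSum (hx : x ∈ (resolution A K).space) : IsFlagWeight (flagSum x) := by
  obtain ⟨hnonneg, -, hS, hchain⟩ := mem_orderComplex_space_iff.1 hx
  refine ⟨flagSum_nonneg hnonneg, ?_, ?_⟩
  · by_contra hne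
    obtain ⟨w, hw, hflag⟩ := (flagSum_ne_zero_iff hnonneg).1 hne
    obtain ⟨σ, -, hwσ⟩ := hS w hw
    exact hwσ.nonempty.ne_empty hflag
  · intro F hF F' hF' _
    obtain ⟨w, hw, rfl⟩ := (flagSum_ne_zero_iff hnonneg).1 hF
    obtain ⟨w', hw', rfl⟩ := (flagSum_ne_zero_iff hnonneg).1 hF'
    exact (hchain.total hw hw').imp flag_mono flag_mono

lemma flagPush_flagSum_ne_zero_iff (hx : ∀ w, 0 ≤ x w) {τ : Finset V} :
    flagPush (flagSum x) τ ≠ 0 ↔ ∃ w, x w ≠ 0 ∧ τ ∈ flag w := by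
  rw [flagPush_ne_zero_iff (flagSum_nonneg hx)]
  simp only [flagSum_ne_zero_iff hx]
  exact ⟨fun ⟨_, hτ, w, hw, hF⟩ => ⟨w, hw, hF ▸ hτ⟩, fun ⟨w, hw, hτ⟩ => ⟨_, hτ, w, hw, rfl⟩⟩

lemma isFlagWeight_flagPush_flagSum (hx : x ∈ (resolution A K).space) :
    IsFlagWeight (flagPush (flagSum x)) := by
  have hnonneg := (mem_orderComplex_space_iff.1 hx).1
  obtain ⟨σ, -, F, v, b, hF, hmax⟩ := exists_isGreatest_mk hx
  have hmem : ∀ τ, flagPush (flagSum x) τ ≠ 0 → τ ∈ F := fun τ hτ => by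
    obtain ⟨w, hw, hτw⟩ := (flagPush_flagSum_ne_zero_iff hnonneg).1 hτ
    simpa only [flag_mk] using flag_mono (hmax.2 hw) hτw
  refine ⟨flagPush_nonneg (flagSum_nonneg hnonneg), ?_, hF.chain.mono hmem⟩
  by_contra hne
  exact Finset.notMem_empty v (hF.mem_core ∅ (hmem ∅ hne))

/-- The orbit map in barycentric coordinates: the flag of a vertex is a vertex of the second
barycentric subdivision of the base. -/
def proj (x : Vert A V → ℝ) : V → ℝ :=
  flagPush (flagPush (flagSum x))

lemma proj_nonneg (hx : ∀ w, 0 ≤ x w) (v : V) : 0 ≤ proj x v :=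
  flagPush_nonneg (flagPush_nonneg (flagSum_nonneg hx)) v

lemma proj_ne_zero_iff (hx : ∀ w, 0 ≤ x w) :
    proj x v ≠ 0 ↔ ∃ w, x w ≠ 0 ∧ ∃ τ ∈ flag w, v ∈ τ := by
  rw [proj, flagPush_ne_zero_iff (flagPush_nonneg (flagSum_nonneg hx))]
  simp only [flagPush_flagSum_ne_zero_iff hx]
  exact ⟨fun ⟨τ, hv, w, hw, hτ⟩ => ⟨w, hw, τ, hτ, hv⟩,
    fun ⟨w, hw, τ, hτ, hv⟩ => ⟨τ, hv, w, hw, hτ⟩⟩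

lemma continuous_proj : Continuous (proj : (Vert A V → ℝ) → V → ℝ) :=
  continuous_flagPush.comp (continuous_flagPush.comp continuous_flagSum)

lemma sum_proj (hx : x ∈ (resolution A K).space) : ∑ v, proj x v = 1 := by
  rw [proj, sum_flagPush (isFlagWeight_flagPush_flagSum hx).empty,
    sum_flagPush (isFlagWeight_flagSum hx).empty, sum_flagSum,
    (mem_orderComplex_space_iff.1 hx).2.1]

lemma proj_mem_space (hx : x ∈ (resolution A K).space) : proj x ∈ K.space := by
  have hnonneg := (mem_orderComplex_space_iff.1 hx).1
  obtain ⟨σ, hσ, F, v, b, hF, hmax⟩ := exists_isGreatest_mk hx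
  refine ⟨proj_nonneg hnonneg, sum_proj hx, σ, hσ, fun v hv => ?_⟩
  obtain ⟨w, hw, τ, hτ, hvτ⟩ := (proj_ne_zero_iff hnonneg).1 hv
  exact hF.subset τ (by simpa only [flag_mk] using flag_mono (hmax.2 hw) hτ) hvτ

lemma proj_comp_vadd (g : Finset V → Coeff A V) : proj (fun w => x (g +ᵥ w)) = proj x := by
  rw [proj, proj, flagSum_comp_vadd]

lemma flagSum_eq_of_proj_eq (hx : x ∈ (resolution A K).space) (hy : y ∈ (resolution A K).space)
    (h : proj x = proj y) : flagSum x = flagSum y := by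
  have hpush : flagPush (flagSum x) = flagPush (flagSum y) :=
    (existsUnique_flagPush_eq (proj_nonneg (mem_orderComplex_space_iff.1 hy).1)).unique
      ⟨isFlagWeight_flagPush_flagSum hx, h⟩ ⟨isFlagWeight_flagPush_flagSum hy, rfl⟩
  exact (existsUnique_flagPush_eq (isFlagWeight_flagPush_flagSum hy).nonneg).unique
    ⟨isFlagWeight_flagSum hx, hpush⟩ ⟨isFlagWeight_flagSum hy, rfl⟩

lemma flagSum_liftPt (s : Finset (Finset V) → ℝ) (v : V) (b : Finset V → Coeff A V) :
    flagSum (liftPt s v b) = s := by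
  ext F
  rw [flagSum, Finset.sum_eq_single (mk F v b), liftPt_mk]
  · intro w hw hne
    rw [Finset.mem_filter_univ] at hw
    exact if_neg fun h => hne (hw ▸ h)
  · simp [flag_mk]

lemma eq_liftPt_of_isGreatest (h : IsGreatest {w | x w ≠ 0} (mk F v b)) :
    x = liftPt (flagSum x) v b := by
  have hmk : ∀ w, x w ≠ 0 → w = mk (flag w) v b := fun w hw => by
    obtain ⟨F', -, rfl⟩ := exists_of_le_mk (h.2 hw)
    rw [flag_mk]
  ext w
  by_cases hw : w = mk (flag w) v b
  · rw [liftPt, if_pos hw, flagSum, Finset.sum_eq_single w]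
    · intro w' hw' hne
      rw [Finset.mem_filter_univ] at hw'
      by_contra hxw'
      exact hne ((hmk w' hxw').trans (hw' ▸ hw.symm))
    · simp
  · rw [liftPt, if_neg hw]
    exact not_not.1 fun hxw => hw (hmk w hxw)

lemma exists_vadd_of_proj_eq (hx : x ∈ (resolution A K).space) (hy : y ∈ (resolution A K).space)
    (h : proj x = proj y) : ∃ g : Finset V → Coeff A V, (fun w => x (-g +ᵥ w)) = y := by
  obtain ⟨σ, -, F, v, b, hF, hxmax⟩ := exists_isGreatest_mk hx
  obtain ⟨σ', -, F', v', b', hF', hymax⟩ := exists_isGreatest_mk hy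
  have hsum := flagSum_eq_of_proj_eq hx hy h
  obtain rfl : F = F' := by
    have hxF := isGreatest_flagSum_support (mem_orderComplex_space_iff.1 hx).1 hxmax
    have hyF := isGreatest_flagSum_support (mem_orderComplex_space_iff.1 hy).1 hymax
    rw [hsum] at hxF
    simpa only [flag_mk] using hxF.unique hyF
  rw [← mk_vadd b' hF'.mem_core hF.mem_core] at hymax
  refine ⟨(edge A v' v +ᵥ b') - b, ?_⟩
  ext w
  rw [eq_liftPt_of_isGreatest hxmax, eq_liftPt_of_isGreatest hymax, liftPt_neg_vadd,
    sub_add_cancel, hsum]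

lemma liftPt_mem_space (hs : IsFlagWeight s) (hsum : ∑ F, s F = 1)
    (hmax : IsGreatest {F | s F ≠ 0} F) (hσ : σ ∈ K.faces) (hF : IsBasedFlag σ F v)
    (b : Finset V → Coeff A V) : liftPt s v b ∈ (resolution A K).space := by
  refine mem_orderComplex_space_iff.2 ⟨fun w => ?_, ?_, fun w hw => ⟨σ, hσ, ?_⟩, ?_⟩
  · rw [liftPt]
    split_ifs
    exacts [hs.nonneg _, le_rfl]
  · rw [← sum_flagSum, flagSum_liftPt, hsum]
  · obtain ⟨hmk, hsw⟩ := liftPt_ne_zero_iff.1 hw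
    rw [hmk]
    exact mk_mem_over_iff.2 (hF.mono (hmax.2 hsw) (hs.nonempty hsw))
  · intro w hw w' hw' _
    obtain ⟨hmk, hsw⟩ := liftPt_ne_zero_iff.1 hw
    obtain ⟨hmk', hsw'⟩ := liftPt_ne_zero_iff.1 hw'
    rw [hmk, hmk']
    exact (hs.chain.total hsw hsw').imp (mk_mono v b) (mk_mono v b)

variable (A) in
lemma exists_proj_eq {y : V → ℝ} (hy : y ∈ K.space) :
    ∃ x ∈ (resolution A K).space, proj x = y := by
  obtain ⟨hnonneg, hsum, σ, hσ, hyσ⟩ := hy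
  obtain ⟨t, ⟨ht, rfl⟩, -⟩ := existsUnique_flagPush_eq hnonneg
  obtain ⟨s, ⟨hs, rfl⟩, -⟩ := existsUnique_flagPush_eq ht.nonneg
  rw [sum_flagPush ht.empty, sum_flagPush hs.empty] at hsum
  obtain ⟨F, hF⟩ := hs.exists_isGreatest <| by
    rintro rfl
    simp at hsum
  have hFt : ∀ τ ∈ F, flagPush s τ ≠ 0 := fun τ hτ =>
    (flagPush_ne_zero_iff hs.nonneg).2 ⟨F, hτ, hF.1⟩
  obtain ⟨v, hv⟩ := exists_isBasedFlag (hs.nonempty hF.1) (ht.chain.mono hFt)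
    (fun τ hτ => ht.nonempty (hFt τ hτ)) fun τ hτ u hu =>
      hyσ u ((flagPush_ne_zero_iff ht.nonneg).2 ⟨τ, hu, hFt τ hτ⟩)
  exact ⟨liftPt s v 0, liftPt_mem_space hs hsum hF hσ hv 0, by rw [proj, flagSum_liftPt]⟩

lemma forall_proj_ne_zero_mem_iff (hx : x ∈ (resolution A K).space) :
    (∀ v, proj x v ≠ 0 → v ∈ σ) ↔ ∀ w, x w ≠ 0 → w ∈ Over σ := by
  obtain ⟨hnonneg, -, hS, -⟩ := mem_orderComplex_space_iff.1 hx
  simp only [proj_ne_zero_iff hnonneg]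
  constructor
  · intro h w hw
    obtain ⟨ρ, -, hρ⟩ := hS w hw
    exact ⟨hρ.nonempty, hρ.chain, hρ.mem_core, fun τ hτ v hv => h v ⟨w, hw, τ, hτ, hv⟩⟩
  · rintro h v ⟨w, hw, τ, hτ, hv⟩
    exact (h w hw).subset τ hτ hv

lemma exists_mem_flag_of_forall_proj_ne_zero (hx : x ∈ (resolution A K).space)
    (hsub : ∀ v, proj x v ≠ 0 → v ∈ σ) (hne : ∀ v ∈ σ, proj x v ≠ 0) :
    ∃ w, x w ≠ 0 ∧ σ ∈ flag w := by
  have hnonneg := (mem_orderComplex_space_iff.1 hx).1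
  have ht := isFlagWeight_flagPush_flagSum hx
  obtain ⟨τ, hτ⟩ := ht.exists_isGreatest fun h0 => by
    simpa [proj, h0, flagPush_zero] using sum_proj hx
  obtain rfl : τ = σ := by
    refine subset_antisymm (fun v hv => hsub v ?_) fun v hv => ?_
    · exact (flagPush_ne_zero_iff ht.nonneg).2 ⟨τ, hv, hτ.1⟩
    · obtain ⟨τ', hvτ', hτ'⟩ := (flagPush_ne_zero_iff ht.nonneg).1 (hne v hv)
      exact hτ.2 hτ' hvτ'
  exact (flagPush_flagSum_ne_zero_iff hnonneg).1 hτ.1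

lemma proj_support_ssubset_iff (hx : x ∈ (resolution A K).space) :
    ((∀ v, proj x v ≠ 0 → v ∈ σ) ∧ ∃ v ∈ σ, proj x v = 0) ↔ ∀ w, x w ≠ 0 → w ∈ OverBdry σ := by
  have hsupp := forall_proj_ne_zero_mem_iff (σ := σ) hx
  constructor
  · rintro ⟨hsub, v, hv, h0⟩ w hw
    refine ⟨hsupp.1 hsub w hw, fun hσ => ?_⟩
    exact (proj_ne_zero_iff (mem_orderComplex_space_iff.1 hx).1).2 ⟨w, hw, σ, hσ, hv⟩ h0
  · intro h
    have hsub := hsupp.2 fun w hw => (h w hw).1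
    refine ⟨hsub, ?_⟩
    by_contra! hne
    obtain ⟨w, hw, hσ⟩ := exists_mem_flag_of_forall_proj_ne_zero hx hsub hne
    exact (h w hw).2 hσ

variable (A K) in
/-- The orbit map of the resolution. -/
def orbitMap (x : (resolution A K).space) : K.space :=
  ⟨proj x.1, proj_mem_space x.2⟩

lemma continuous_orbitMap : Continuous (orbitMap A K) :=
  (continuous_proj.comp continuous_subtype_val).subtype_mk _

lemma surjective_orbitMap : Surjective (orbitMap A K) := fun y =>
  let ⟨x, hx, hxy⟩ := exists_proj_eq A y.2
  ⟨⟨x, hx⟩, Subtype.ext hxy⟩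

lemma orbitMap_eq_orbitMap_iff {x y : (resolution A K).space} :
    orbitMap A K x = orbitMap A K y ↔ ∃ g : Finset V → Coeff A V,
      (resolution A K).permAct (fun _ => image_vadd_mem_resolution g) x = y := by
  constructor
  · intro h
    obtain ⟨g, hg⟩ := exists_vadd_of_proj_eq x.2 y.2 (Subtype.ext_iff.1 h)
    exact ⟨g, Subtype.ext hg⟩
  · rintro ⟨g, rfl⟩
    exact Subtype.ext (proj_comp_vadd (-g)).symm

lemma orbitMap_mem_geomSimplex_iff (x : (resolution A K).space) :
    orbitMap A K x ∈ K.geomSimplex σ ↔ x.1 ∈ (orderComplex (Over σ)).space :=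
  (forall_proj_ne_zero_mem_iff x.2).trans (mem_orderComplex_space_iff_of_mem x.2).symm

lemma orbitMap_mem_geomBoundary_iff (x : (resolution A K).space) :
    orbitMap A K x ∈ K.geomBoundary σ ↔ x.1 ∈ (orderComplex (OverBdry σ)).space :=
  (proj_support_ssubset_iff x.2).trans (mem_orderComplex_space_iff_of_mem x.2).symm

lemma bijective_ASHmap_orbitMap (hσ : σ ∈ K.faces) :
    Bijective (AS.ASHmap A (continuous_inclusion (preimage_mono (K.geomBoundary_subset σ) :
      orbitMap A K ⁻¹' K.geomBoundary σ ⊆ orbitMap A K ⁻¹' K.geomSimplex σ)) 1) := by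
  have hne : σ.Nonempty := K.nonempty_of_mem σ hσ
  have : Nonempty (Vert A V) := ⟨mk ∅ hne.choose 0⟩
  have hOver := orderComplex_mono (over_subset_vertices (A := A) hσ)
  have hBdry := (orderComplex_mono (overBdry_subset_over (A := A) (σ := σ))).trans hOver
  exact AS.bijective_ASHmap_of_homeomorph
    (FinSimpComplex.preimageHomeomorph hBdry orbitMap_mem_geomBoundary_iff)
    (FinSimpComplex.preimageHomeomorph hOver orbitMap_mem_geomSimplex_iff) _ _ (fun _ => rfl)
    (bijective_ASHmap_one_orderComplex overBdry_subset_over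
      (fun _ ha _ hh => exists_isPotentialOn_over hne ha hh) fun _ ha => exists_isCocycleOn_over ha)

end OrbitMap

end Resolution

lemma exists_addEquiv_fin_fun (A I J : Type*) [AddCommGroup A] [Finite I] [Finite J] :
    ∃ m : ℕ, Nonempty ((Fin m → A) ≃+ (I → J → A)) := by
  obtain ⟨m, ⟨e⟩⟩ := Finite.exists_equiv_fin (I × J)
  exact ⟨m, ⟨((LinearEquiv.funCongrLeft ℤ A e).trans (LinearEquiv.curry ℤ A I J)).toAddEquiv⟩⟩

open Resolution in
theorem resolution_iso_H1_on_simplices_general.{u, v} {A : Type u} [AddCommGroup A] [Finite A]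
    {V : Type v} [Fintype V] [DecidableEq V] (K : FinSimpComplex V) :
    ∃ (m : ℕ) (W : Type (max u v)) (_ : Fintype W) (_ : DecidableEq W) (Khat : FinSimpComplex W)
      (ρ : (Fin m → A) → W ≃ W)
      (hsimp : ∀ a : Fin m → A, ∀ s ∈ Khat.faces, s.image (ρ a) ∈ Khat.faces)
      (f : Khat.space → K.space),
      ρ 0 = Equiv.refl W ∧
      (∀ a b, ρ (a + b) = (ρ a).trans (ρ b)) ∧
      Continuous f ∧ Surjective f ∧
      (∀ x y : Khat.space, f x = f y ↔ ∃ a, Khat.permAct (hsimp a) x = y) ∧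
      ∀ σ ∈ K.faces, Bijective (AS.ASHmap A (continuous_inclusion
        (preimage_mono (K.geomBoundary_subset σ) :
          f ⁻¹' K.geomBoundary σ ⊆ f ⁻¹' K.geomSimplex σ)) 1) := by
  obtain ⟨m, ⟨G⟩⟩ := exists_addEquiv_fin_fun A (Finset V) (AltCochain A V)
  refine ⟨m, Vert A V, inferInstance, inferInstance, resolution A K,
    fun a => AddAction.toPerm (G a), fun a _ => image_vadd_mem_resolution (G a), orbitMap A K,
    ?_, fun a b => ?_, continuous_orbitMap, surjective_orbitMap, fun x y => ?_,
    fun σ hσ => bijective_ASHmap_orbitMap hσ⟩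
  · ext w
    simp
  · ext w
    simp [add_comm a b, add_vadd]
  · exact orbitMap_eq_orbitMap_iff.trans G.surjective.exists

/-- **Lemma 16** (Dranishnikov–West).  For every prime `p` and finite connected simplicial
complex `L` there are an integer `m`, a finite simplicial complex `L̂` and a simplicial
action of `(ℤ/pℤ)^m` on `L̂` whose orbit space is (a subdivision of) `L`, such that the
orbit map `f : L̂ → L` has the property that for each simplex `σ` of `L` the inclusion
`f⁻¹(∂σ) → f⁻¹(σ)` induces an isomorphism on one-dimensional (co)homology with `ℤ/pℤ`
coefficients.  (With field coefficients `ℤ/pℤ`, an inclusion induces an isomorphism on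
`H_1` iff it does on `H¹`; cohomology here is Alexander–Spanier cohomology, which agrees
with Čech and singular cohomology on compact polyhedra.) -/
theorem resolution_iso_H1_on_simplices (p : ℕ) (hp : p.Prime)
    (V : Type) [Fintype V] [DecidableEq V] (K : FinSimpComplex V)
    (hne : K.faces.Nonempty) (hconn : ConnectedSpace K.space) :
    ∃ (m : ℕ) (W : Type) (_ : Fintype W) (_ : DecidableEq W) (Khat : FinSimpComplex W)
      (ρ : (Fin m → ZMod p) → W ≃ W)
      (hsimp : ∀ a : Fin m → ZMod p, ∀ s ∈ Khat.faces, s.image (ρ a) ∈ Khat.faces)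
      (f : ↥Khat.space → ↥K.space),
      -- `ρ` is a simplicial action of `(ℤ/pℤ)^m` on `L̂`:
      (ρ 0 = Equiv.refl W) ∧
      (∀ a b, ρ (a + b) = (ρ a).trans (ρ b)) ∧
      -- `f` is (induced by) the orbit map of the action: it is a continuous surjection
      -- whose fibres are exactly the orbits, so that `L̂/(ℤ/pℤ)^m ≅ L`:
      Continuous f ∧ Function.Surjective f ∧
      (∀ x y : ↥Khat.space, f x = f y ↔ ∃ a, Khat.permAct (hsimp a) x = y) ∧
      -- (*) for each simplex `σ` of `L`, the inclusion `f⁻¹(∂σ) → f⁻¹(σ)` induces an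
      -- isomorphism on one-dimensional (co)homology with `ℤ/pℤ` coefficients:
      (∀ σ ∈ K.faces,
        Function.Bijective
          (AS.ASHmap (ZMod p)
            (continuous_inclusion
              (Set.preimage_mono (K.geomBoundary_subset σ) : 
                f ⁻¹' (K.geomBoundary σ) ⊆ f ⁻¹' (K.geomSimplex σ))) 1)) := by
  have : NeZero p := ⟨hp.ne_zero⟩
  exact resolution_iso_H1_on_simplices_general K
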